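/- arXiv:2002.07256 — 3 statements merged into one kernel-verified Lean document; each statement's English description precedes it below -/
import Mathlib

section
/- Let k ≥ 2 be a natural number, let h : ℕ → ℚ be a k-automatic sequence taking nonnegative rational values, and let s(n) = ∑_{j<n} h(j). Then the limit superior limsup_{n→∞} s(n)/n is a rational number; that is, there exists q ∈ ℚ such that limsup_{n→∞} s(n)/n = q. -/
open Filter

/-- A sequence `h : ℕ → Δ` is `k`-automatic if there is a DFAO (finite state set `Q`,
initial state `q₀`, transition function `δ`, output function `τ`) computing `h n` by
reading the base-`k` digits of `n` from the most significant digit to the least. -/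
def IsAutomaticSeq {Δ : Type*} (k : ℕ) (h : ℕ → Δ) : Prop :=
  ∃ (Q : Type) (_ : Fintype Q) (q₀ : Q) (δ : Q → ℕ → Q) (τ : Q → Δ),
    ∀ n : ℕ, h n = τ (((Nat.digits k n).reverse).foldl δ q₀)


namespace UDR

set_option linter.unusedSectionVars false

lemma exists_pos_le {ι : Type*} (s : Finset ι) (f : ι → ℝ) (hf : ∀ i ∈ s, 0 < f i) :
    ∃ e : ℝ, 0 < e ∧ ∀ i ∈ s, e ≤ f i := by
  rcases s.eq_empty_or_nonempty with h | h
  · subst h; exact ⟨1, one_pos, by simp⟩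
  · obtain ⟨i, hi, hmin⟩ := s.exists_min_image f h
    exact ⟨f i, hf i hi, hmin⟩

lemma exists_pos_le_rat {ι : Type*} (s : Finset ι) (f : ι → ℚ) (hf : ∀ i ∈ s, 0 < f i) :
    ∃ e : ℚ, 0 < e ∧ ∀ i ∈ s, e ≤ f i := by
  rcases s.eq_empty_or_nonempty with h | h
  · subst h; exact ⟨1, one_pos, by simp⟩
  · obtain ⟨i, hi, hmin⟩ := s.exists_min_image f h
    exact ⟨f i, hf i hi, hmin⟩

/-- Row-stochastic matrices. -/
def Sto {Q : Type} [Fintype Q] (A : Matrix Q Q ℚ) : Prop :=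
  (∀ q r, 0 ≤ A q r) ∧ ∀ q, ∑ r, A q r = 1

variable {Q : Type} [Fintype Q] [DecidableEq Q]

lemma Sto.one : Sto (1 : Matrix Q Q ℚ) := by
  constructor
  · intro q r
    by_cases h : q = r
    · subst h; simp
    · simp [Matrix.one_apply_ne h]
  · intro q; simp [Matrix.one_apply]

lemma Sto.mul {A B : Matrix Q Q ℚ} (hA : Sto A) (hB : Sto B) : Sto (A * B) := by
  constructor
  · intro q r
    rw [Matrix.mul_apply]
    exact Finset.sum_nonneg fun i _ => mul_nonneg (hA.1 _ _) (hB.1 _ _)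
  · intro q
    simp only [Matrix.mul_apply]
    rw [Finset.sum_comm]
    simp only [← Finset.mul_sum, hB.2, mul_one, hA.2]

lemma Sto.pow {A : Matrix Q Q ℚ} (hA : Sto A) (m : ℕ) : Sto (A ^ m) := by
  induction m with
  | zero => simpa using Sto.one
  | succ m ih => rw [pow_succ]; exact ih.mul hA

lemma Sto.le_one {A : Matrix Q Q ℚ} (hA : Sto A) (q r : Q) : A q r ≤ 1 := by
  rw [← hA.2 q]
  exact Finset.single_le_sum (f := fun r => A q r) (fun i _ => hA.1 q i) (Finset.mem_univ r)

lemma Sto.mulVec_le {A : Matrix Q Q ℚ} (hA : Sto A) {f : Q → ℚ} {c : ℚ} (hf : ∀ q, f q ≤ c)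
    (q : Q) : (A.mulVec f) q ≤ c := by
  calc (A.mulVec f) q = ∑ r, A q r * f r := rfl
    _ ≤ ∑ r, A q r * c := Finset.sum_le_sum fun r _ => mul_le_mul_of_nonneg_left (hf r) (hA.1 q r)
    _ = c := by rw [← Finset.sum_mul, hA.2, one_mul]

lemma mul_pos_iff' {A B : Matrix Q Q ℚ} (hA : Sto A) (hB : Sto B) (q r : Q) :
    0 < (A * B) q r ↔ ∃ i, 0 < A q i ∧ 0 < B i r := by
  rw [Matrix.mul_apply]
  constructor
  · intro h
    obtain ⟨i, _, hi⟩ := Finset.exists_lt_of_sum_lt (f := fun _ => (0:ℚ)) (s := Finset.univ)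
      (g := fun i => A q i * B i r) (by simpa using h)
    have h1 := hA.1 q i
    have h2 := hB.1 i r
    refine ⟨i, lt_of_le_of_ne h1 ?_, lt_of_le_of_ne h2 ?_⟩
    · intro h0; simp [← h0] at hi
    · intro h0; simp [← h0] at hi
  · rintro ⟨i, h1, h2⟩
    exact lt_of_lt_of_le (mul_pos h1 h2) (Finset.single_le_sum (f := fun i => A q i * B i r)
      (fun i _ => mul_nonneg (hA.1 _ _) (hB.1 _ _)) (Finset.mem_univ i))

/-- Some power has idempotent support. -/
lemma exists_pow_supp {P : Matrix Q Q ℚ} (hP : Sto P) :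
    ∃ p : ℕ, 1 ≤ p ∧ ∀ m q r, 0 < ((P ^ p) ^ (m + 1)) q r → 0 < (P ^ p) q r := by
  let f : ℕ → Set (Q × Q) := fun m => {x | 0 < (P ^ m) x.1 x.2}
  have hadd : ∀ a b c, f a = f b → f (a + c) = f (b + c) := by
    intro a b c h
    ext ⟨q, r⟩
    simp only [f, Set.mem_ofPred_eq, pow_add]
    rw [mul_pos_iff' (hP.pow a) (hP.pow c), mul_pos_iff' (hP.pow b) (hP.pow c)]
    have : ∀ i, 0 < (P ^ a) q i ↔ 0 < (P ^ b) q i := fun i => by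
      have := congrArg (fun s => (q, i) ∈ s) h
      simpa [f] using this
    simp [this]
  obtain ⟨a, b, hab, hf⟩ : ∃ a b, a < b ∧ f (a + 1) = f (b + 1) := by
    obtain ⟨a, b, hab, hf⟩ := Finite.exists_ne_map_eq_of_infinite (fun n => f (n + 1))
    rcases lt_or_gt_of_ne hab with h | h
    · exact ⟨a, b, h, hf⟩
    · exact ⟨b, a, h, hf.symm⟩
  obtain ⟨c, rfl⟩ := Nat.exists_eq_add_of_lt hab
  -- period c + 1 from a + 1
  have hper : ∀ n, f (a + 1 + n) = f (a + 1 + n + (c + 1)) := by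
    intro n
    rw [hadd _ _ n hf]; congr 1; ring
  have hper2 : ∀ t n, f (a + 1 + n) = f (a + 1 + n + t * (c + 1)) := by
    intro t
    induction t with
    | zero => simp
    | succ t ih =>
      intro n
      rw [ih n, add_assoc (a+1), hper]; congr 1; ring
  refine ⟨(a + 1) * (c + 1), Nat.mul_pos (Nat.succ_pos _) (Nat.succ_pos _), ?_⟩
  intro m q r h
  rw [← pow_mul] at h
  have := hper2 (m * (a + 1)) ((a + 1) * c)
  have h2 : f ((a + 1) * (c + 1)) = f ((a + 1) * (c + 1) * (m + 1)) := by
    convert this using 2 <;> ring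
  have h3 := congrArg (fun s => (q, r) ∈ s) h2
  simp only [f, Set.mem_ofPred_eq] at h3
  rw [h3]; exact h

lemma tendsto_aux [Nonempty Q] {A : Matrix Q Q ℚ} (hA : Sto A)
    (hs : ∀ m q r, 0 < (A ^ (m + 1)) q r → 0 < A q r) (y : Q → ℚ) (e : ℚ) (he : 0 < e) :
    ∃ m0, ∀ m ≥ m0, ∀ q, ((A ^ m).mulVec (A.mulVec y - y)) q ≤ e := by
  set z := A.mulVec y - y with hz
  -- reduction to a single exponent
  suffices H : ∃ m0, ∀ q, ((A ^ m0).mulVec z) q ≤ e by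
    obtain ⟨m0, h⟩ := H
    refine ⟨m0, fun m hm q => ?_⟩
    obtain ⟨j, rfl⟩ := Nat.exists_eq_add_of_le' hm
    rw [pow_add, ← Matrix.mulVec_mulVec]
    exact (hA.pow j).mulVec_le h q
  by_contra! hcon
  obtain ⟨ε, hε, hεA⟩ := exists_pos_le_rat (Finset.univ.filter fun x : Q × Q => 0 < A x.1 x.2)
    (fun x => A x.1 x.2) (by simp)
  have hdom : ∀ j q r, ε * (A ^ (j + 1)) q r ≤ A q r := by
    intro j q r
    rcases ((hA.pow (j + 1)).1 q r).eq_or_lt with h | h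
    · rw [← h]; simpa using hA.1 q r
    · have h1 := hεA (q, r) (by simpa using hs j q r h)
      have h2 := (hA.pow (j + 1)).le_one q r
      simp only at h1
      nlinarith
  choose x hx using fun m => Finite.exists_max ((A ^ m).mulVec z)
  let a : ℕ → ℚ := fun m => ((A ^ m).mulVec z) (x m)
  have ha : ∀ m q, ((A ^ m).mulVec z) q ≤ a m := fun m q => hx m q
  have hae : ∀ m, e < a m := fun m => by
    obtain ⟨q, hq⟩ := hcon m
    exact hq.trans_le (ha m q)
  -- bound on y
  obtain ⟨Y, hY⟩ : ∃ Y : ℚ, ∀ q, |y q| ≤ Y := by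
    obtain ⟨q, hq⟩ := Finite.exists_max fun q => |y q|
    exact ⟨_, hq⟩
  have hYn : ∀ n q, |((A ^ n).mulVec y) q| ≤ Y := by
    intro n q
    rw [abs_le]
    constructor
    · have := (hA.pow n).mulVec_le (f := -y) (c := Y) (fun q => by
        have := abs_le.1 (hY q); simp; linarith) q
      rw [Matrix.mulVec_neg] at this
      simp at this; linarith
    · exact (hA.pow n).mulVec_le (fun q => (abs_le.1 (hY q)).2) q
  obtain ⟨N, hN⟩ := exists_nat_gt (2 * Y / (e / 2))
  -- a small drop
  obtain ⟨m, hm⟩ : ∃ m, a m - a (m + 1) ≤ ε * (e / 2) := by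
    by_contra! hc
    have : ∀ m : ℕ, a m ≤ a 0 - m * (ε * (e / 2)) := by
      intro m
      induction m with
      | zero => simp
      | succ m ih => have := hc m; push_cast; linarith
    obtain ⟨M, hM⟩ := exists_nat_gt (a 0 / (ε * (e / 2)))
    rw [div_lt_iff₀ (by positivity)] at hM
    have h1 := this M
    have h2 := hae M
    linarith
  set q := x (m + 1) with hq
  have key : ∀ j, e / 2 ≤ ((A ^ (m + 1 + j)).mulVec z) q := by
    intro j
    have h1 : ((A ^ (m + 1)).mulVec z) q - ε * ((A ^ (m + 1 + j)).mulVec z) q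
        ≤ (1 - ε) * a m := by
      have e1 : A ^ (m + 1) = A * A ^ m := pow_succ' A m
      have e2 : A ^ (m + 1 + j) = A ^ (j + 1) * A ^ m := by rw [← pow_add]; congr 1; ring
      rw [e1, e2, ← Matrix.mulVec_mulVec, ← Matrix.mulVec_mulVec]
      set w := (A ^ m).mulVec z with hw
      calc (A.mulVec w) q - ε * ((A ^ (j + 1)).mulVec w) q
          = ∑ r, (A q r - ε * (A ^ (j + 1)) q r) * w r := by
            simp only [Matrix.mulVec, dotProduct, Finset.mul_sum, ← Finset.sum_sub_distrib]
            exact Finset.sum_congr rfl fun r _ => by ring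
        _ ≤ ∑ r, (A q r - ε * (A ^ (j + 1)) q r) * a m :=
            Finset.sum_le_sum fun r _ => mul_le_mul_of_nonneg_left (ha m r)
              (sub_nonneg.2 (hdom j q r))
        _ = (1 - ε) * a m := by
            rw [← Finset.sum_mul, Finset.sum_sub_distrib, ← Finset.mul_sum, hA.2,
              (hA.pow (j + 1)).2, mul_one]
    have h2 : ((A ^ (m + 1)).mulVec z) q = a (m + 1) := rfl
    have h3 := hae m
    rw [h2] at h1
    have h4 : ε * (e / 2) ≤ ε * ((A ^ (m + 1 + j)).mulVec z) q := by nlinarith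
    exact le_of_mul_le_mul_left h4 hε
  have tel : ∀ N, ∑ j ∈ Finset.range N, ((A ^ (m + 1 + j)).mulVec z) q
      = ((A ^ (m + 1 + N)).mulVec y) q - ((A ^ (m + 1)).mulVec y) q := by
    intro N
    rw [← Finset.sum_range_sub (fun j => ((A ^ (m + 1 + j)).mulVec y) q)]
    · refine Finset.sum_congr rfl fun j _ => ?_
      rw [hz, Matrix.mulVec_sub, Matrix.mulVec_mulVec, ← pow_succ]
      rfl
  have h5 : (N : ℚ) * (e / 2) ≤ ∑ j ∈ Finset.range N, ((A ^ (m + 1 + j)).mulVec z) q := by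
    have := Finset.card_nsmul_le_sum (Finset.range N) _ (e / 2) (fun j _ => key j)
    simpa using this
  rw [tel] at h5
  rw [div_lt_iff₀ (by positivity)] at hN
  have h6 := abs_le.1 (hYn (m + 1 + N) q)
  have h7 := abs_le.1 (hYn (m + 1) q)
  linarith

lemma tendsto_abs [Nonempty Q] {A : Matrix Q Q ℚ} (hA : Sto A)
    (hs : ∀ m q r, 0 < (A ^ (m + 1)) q r → 0 < A q r) (y : Q → ℚ) (e : ℚ) (he : 0 < e) :
    ∃ m, ∀ q, |((A ^ m).mulVec (A.mulVec y - y)) q| ≤ e := by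
  obtain ⟨m1, h1⟩ := tendsto_aux hA hs y e he
  obtain ⟨m2, h2⟩ := tendsto_aux hA hs (-y) e he
  refine ⟨max m1 m2, fun q => ?_⟩
  have a1 := h1 _ (le_max_left m1 m2) q
  have a2 := h2 _ (le_max_right m1 m2) q
  have : A.mulVec (-y) - -y = -(A.mulVec y - y) := by rw [Matrix.mulVec_neg]; abel
  rw [this, Matrix.mulVec_neg] at a2
  simp only [Pi.neg_apply] at a2
  rw [abs_le]; constructor <;> linarith

lemma exists_harmonic [Nonempty Q] {A : Matrix Q Q ℚ} (hA : Sto A)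
    (hs : ∀ m q r, 0 < (A ^ (m + 1)) q r → 0 < A q r) (τ : Q → ℚ) :
    ∃ v : Q → ℚ, A.mulVec v = v ∧
      ∀ e : ℚ, 0 < e → ∃ m, ∀ q, |((A ^ m).mulVec (τ - v)) q| ≤ e := by
  let L : (Q → ℚ) →ₗ[ℚ] (Q → ℚ) := A.mulVecLin - LinearMap.id
  have hL : ∀ y, L y = A.mulVec y - y := fun y => rfl
  have hdis : Disjoint (LinearMap.ker L) (LinearMap.range L) := by
    rw [Submodule.disjoint_def]
    rintro u hu ⟨y, rfl⟩
    rw [LinearMap.mem_ker, hL, sub_eq_zero] at hu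
    have hpow : ∀ m, (A ^ m).mulVec (L y) = L y := by
      intro m
      induction m with
      | zero => simp
      | succ m ih => rw [pow_succ, ← Matrix.mulVec_mulVec, hu, ih]
    ext q
    by_contra hne
    have hpos : 0 < |L y q| := abs_pos.2 hne
    obtain ⟨m, hm⟩ := tendsto_abs hA hs y (|L y q| / 2) (by positivity)
    have := hm q
    rw [← hL, hpow] at this
    linarith
  have htop := Submodule.eq_top_of_disjoint (LinearMap.ker L) (LinearMap.range L)
    (by rw [add_comm]; exact (LinearMap.finrank_range_add_finrank_ker L).ge) hdis
  obtain ⟨v, hv, w, ⟨y, rfl⟩, hvw⟩ := Submodule.mem_sup.1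
    (show τ ∈ LinearMap.ker L ⊔ LinearMap.range L by rw [htop]; trivial)
  rw [LinearMap.mem_ker, hL, sub_eq_zero] at hv
  refine ⟨v, hv, fun e he => ?_⟩
  obtain ⟨m, hm⟩ := tendsto_abs hA hs y e he
  refine ⟨m, ?_⟩
  have : τ - v = A.mulVec y - y := by rw [← hvw, hL]; abel
  rw [this]; exact hm

lemma sum_blocks {M : Type*} [AddCommMonoid M] (g : ℕ → M) (K n : ℕ) :
    ∑ j ∈ Finset.range (K * n), g j
      = ∑ i ∈ Finset.range n, ∑ d ∈ Finset.range K, g (K * i + d) := by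
  induction n with
  | zero => simp
  | succ n ih => rw [Nat.mul_succ, Finset.sum_range_add, ih, Finset.sum_range_succ]

/-- transition matrix -/
def trans (k : ℕ) (δ : Q → ℕ → Q) : Matrix Q Q ℚ :=
  fun q r => (∑ d ∈ Finset.range k, if δ q d = r then (1:ℚ) else 0) / k

lemma trans_mulVec (k : ℕ) (hk : 0 < k) (δ : Q → ℕ → Q) (f : Q → ℚ) (q : Q) :
    ∑ d ∈ Finset.range k, f (δ q d) = k * ((trans k δ).mulVec f) q := by
  have hk' : (k : ℚ) ≠ 0 := by positivity
  simp only [Matrix.mulVec, dotProduct, trans, Finset.mul_sum]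
  have : ∀ r, (k : ℚ) * ((∑ d ∈ Finset.range k, if δ q d = r then (1:ℚ) else 0) / k * f r)
      = ∑ d ∈ Finset.range k, if δ q d = r then f r else 0 := by
    intro r
    field_simp
    rw [Finset.sum_mul]
    exact Finset.sum_congr rfl fun d _ => by split_ifs <;> simp
  simp only [this]
  rw [Finset.sum_comm]
  simp

lemma trans_sto (k : ℕ) (hk : 0 < k) (δ : Q → ℕ → Q) : Sto (trans k δ) := by
  constructor
  · intro q r
    exact div_nonneg (Finset.sum_nonneg fun _ _ => by split_ifs <;> simp) (by positivity)
  · intro q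
    have h := trans_mulVec k hk δ (fun _ => 1) q
    have hk' : (k : ℚ) ≠ 0 := by positivity
    simp only [Matrix.mulVec, dotProduct, mul_one, Finset.sum_const, Finset.card_range,
      nsmul_eq_mul] at h
    exact mul_left_cancel₀ hk' (by rw [mul_one]; exact h.symm)

lemma exists_pow_trans (k : ℕ) (hk : 0 < k) (δ : Q → ℕ → Q) (st : ℕ → Q)
    (hst : ∀ n d, d < k → st (k * n + d) = δ (st n) d) (p : ℕ) :
    ∃ δ' : Q → ℕ → Q, (∀ n d, d < k ^ p → st (k ^ p * n + d) = δ' (st n) d) ∧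
      ∀ (f : Q → ℚ) q, ∑ d ∈ Finset.range (k ^ p), f (δ' q d)
        = (k ^ p : ℕ) * (((trans k δ) ^ p).mulVec f) q := by
  induction p with
  | zero =>
    refine ⟨fun q _ => q, ?_, ?_⟩
    · intro n d hd
      have : d = 0 := by simpa using hd
      simp [this]
    · intro f q; simp
  | succ p ih =>
    obtain ⟨δ', h1, h2⟩ := ih
    refine ⟨fun q D => δ (δ' q (D / k)) (D % k), ?_, ?_⟩
    · intro n D hD
      have hlt : D / k < k ^ p := Nat.div_lt_of_lt_mul (by rwa [pow_succ, mul_comm] at hD)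
      show _ = δ (δ' (st n) (D / k)) (D % k)
      rw [← h1 n _ hlt, ← hst _ _ (Nat.mod_lt _ hk)]
      congr 1
      have := Nat.div_add_mod D k
      rw [mul_add, add_assoc, this, pow_succ]; ring
    · intro f q
      rw [pow_succ' k p, sum_blocks]
      have : ∀ i, ∑ d ∈ Finset.range k, f (δ (δ' q ((k * i + d) / k)) ((k * i + d) % k))
          = k * ((trans k δ).mulVec f) (δ' q i) := by
        intro i
        rw [← trans_mulVec k hk]
        refine Finset.sum_congr rfl fun d hd => ?_
        have hd := Finset.mem_range.1 hd
        rw [Nat.mul_add_div hk, Nat.div_eq_of_lt hd, Nat.mul_add_mod, Nat.mod_eq_of_lt hd, add_zero]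
      simp only [this]
      rw [← Finset.mul_sum, h2 ((trans k δ).mulVec f) q, pow_succ, Matrix.mulVec_mulVec]
      push_cast; ring

lemma exists_abs_bound {F : Type*} [Field F] [LinearOrder F] [IsStrictOrderedRing F]
    (f : Q → F) : ∃ C : F, 0 ≤ C ∧ ∀ q, |f q| ≤ C :=
  ⟨∑ q, |f q|, Finset.sum_nonneg fun _ _ => abs_nonneg _, fun q =>
    Finset.single_le_sum (f := fun q => |f q|) (fun _ _ => abs_nonneg _) (Finset.mem_univ q)⟩

/-- The error term is sublinear. -/
lemma error_bound (K : ℕ) (hK : 0 < K) (δ : Q → ℕ → Q) (st : ℕ → Q)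
    (hst : ∀ n d, d < K → st (K * n + d) = δ (st n) d) (A : Matrix Q Q ℚ)
    (hA : ∀ (f : Q → ℚ) q, ∑ d ∈ Finset.range K, f (δ q d) = K * (A.mulVec f) q)
    (e : ℚ) (he : 0 < e) (m : ℕ) :
    ∀ u : Q → ℚ, (∀ q, |((A ^ m).mulVec u) q| ≤ e) →
      ∃ C : ℚ, ∀ n : ℕ, |∑ j ∈ Finset.range n, u (st j)| ≤ e * n + C := by
  induction m with
  | zero =>
    intro u hu
    refine ⟨0, fun n => ?_⟩
    simp only [pow_zero, Matrix.one_mulVec] at hu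
    calc |∑ j ∈ Finset.range n, u (st j)| ≤ ∑ j ∈ Finset.range n, |u (st j)| :=
          Finset.abs_sum_le_sum_abs _ _
      _ ≤ ∑ j ∈ Finset.range n, e := Finset.sum_le_sum fun j _ => hu _
      _ = e * n + 0 := by simp [mul_comm]
  | succ m ih =>
    intro u hu
    obtain ⟨C, hC⟩ := ih (A.mulVec u) (by
      intro q; rw [Matrix.mulVec_mulVec, ← pow_succ]; exact hu q)
    obtain ⟨U, hU0, hU⟩ := exists_abs_bound u
    refine ⟨K * C + K * U, fun n => ?_⟩
    have hn := Nat.div_add_mod n K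
    have hlt := Nat.mod_lt n hK
    set a := n / K
    set b := n % K
    rw [← hn, Finset.sum_range_add, sum_blocks]
    have h1 : ∑ i ∈ Finset.range a, ∑ d ∈ Finset.range K, u (st (K * i + d))
        = K * ∑ i ∈ Finset.range a, (A.mulVec u) (st i) := by
      rw [Finset.mul_sum]
      refine Finset.sum_congr rfl fun i _ => ?_
      rw [← hA]
      exact Finset.sum_congr rfl fun d hd => by rw [hst _ _ (Finset.mem_range.1 hd)]
    have h2 : |∑ x ∈ Finset.range b, u (st (K * a + x))| ≤ K * U := by
      calc _ ≤ ∑ x ∈ Finset.range b, |u (st (K * a + x))| := Finset.abs_sum_le_sum_abs _ _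
        _ ≤ ∑ x ∈ Finset.range b, U := Finset.sum_le_sum fun j _ => hU _
        _ = b * U := by simp
        _ ≤ K * U := by
          have : (b : ℚ) ≤ K := by exact_mod_cast hlt.le
          exact mul_le_mul_of_nonneg_right this hU0
    rw [h1]
    have h3 : |(K : ℚ) * ∑ i ∈ Finset.range a, (A.mulVec u) (st i)| ≤ K * (e * a + C) := by
      rw [abs_mul, Nat.abs_cast]
      exact mul_le_mul_of_nonneg_left (hC a) (by positivity)
    have h4 : (0 : ℚ) ≤ e * b := by positivity
    refine (abs_add_le _ _).trans ?_
    push_cast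
    nlinarith

lemma eq_zero_of_shift {F : Type*} [Field F] [LinearOrder F] [IsStrictOrderedRing F]
    (K : ℕ) (hK : 2 ≤ K) (σ : Q → Q) (x : Q → F) (hx : ∀ q, K * x q = x (σ q)) : x = 0 := by
  rcases isEmpty_or_nonempty Q with hQ | hQ
  · exact Subsingleton.elim _ _
  obtain ⟨q0, hq0⟩ := Finite.exists_max fun q => |x q|
  have hK' : (2 : F) ≤ K := by exact_mod_cast hK
  have h1 : (K : F) * |x q0| ≤ |x q0| := by
    have := hq0 (σ q0)
    rw [← hx, abs_mul, Nat.abs_cast] at this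
    exact this
  have h2 : |x q0| ≤ 0 := by nlinarith [abs_nonneg (x q0)]
  ext q
  have := (hq0 q).trans h2
  simpa using this

lemma exists_solve (K : ℕ) (hK : 2 ≤ K) (σ : Q → Q) (b : Q → ℚ) :
    ∃ x : Q → ℚ, ∀ q, K * x q = b q + x (σ q) := by
  let L : (Q → ℚ) →ₗ[ℚ] (Q → ℚ) :=
    { toFun := fun x q => K * x q - x (σ q)
      map_add' := by intro x y; ext q; simp; ring
      map_smul' := by intro c x; ext q; simp; ring }
  have hinj : Function.Injective L := by
    rw [← LinearMap.ker_eq_bot, LinearMap.ker_eq_bot']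
    intro x hx
    refine eq_zero_of_shift K hK σ x fun q => ?_
    have : K * x q - x (σ q) = 0 := congrFun hx q
    linarith
  obtain ⟨x, hx⟩ := LinearMap.injective_iff_surjective.1 hinj b
  refine ⟨x, fun q => ?_⟩
  have : K * x q - x (σ q) = b q := congrFun hx q
  linarith

lemma solve_nonneg (K : ℕ) (hK : 2 ≤ K) (σ : Q → Q) (b x : Q → ℚ) (hb : ∀ q, 0 ≤ b q)
    (hx : ∀ q, K * x q = b q + x (σ q)) (q : Q) : 0 ≤ x q := by
  have : Nonempty Q := ⟨q⟩
  obtain ⟨q0, hq0⟩ := Finite.exists_min x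
  refine le_trans ?_ (hq0 q)
  have h1 := hx q0
  have h2 := hq0 (σ q0)
  have h3 := hb q0
  have hK' : (2 : ℚ) ≤ K := by exact_mod_cast hK
  nlinarith

/-- Optimal value function of the discounted problem. -/
lemma exists_bellman (K : ℕ) (hK : 2 ≤ K) (δ : Q → ℕ → Q) (c : Q → ℕ → ℝ) :
    ∃ g : Q → ℝ, ∃ D : Q → ℕ, (∀ q, D q < K) ∧ (∀ q, K * g q = c q (D q) + g (δ q (D q))) ∧
      ∀ q d, d < K → c q d + g (δ q d) ≤ K * g q := by
  have hne : (Finset.range K).Nonempty := ⟨0, by simp; omega⟩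
  have hK0 : (0 : ℝ) < K := by exact_mod_cast (by omega : 0 < K)
  have hK2 : (2 : ℝ) ≤ K := by exact_mod_cast hK
  let B : (Q → ℝ) → (Q → ℝ) := fun g q =>
    (Finset.range K).sup' hne (fun d => c q d + g (δ q d)) / K
  have hone : ∀ g g' : Q → ℝ, ∀ q, B g q ≤ B g' q + dist g g' / 2 := by
    intro g g' q
    have h1 : (Finset.range K).sup' hne (fun d => c q d + g (δ q d)) ≤
        (Finset.range K).sup' hne (fun d => c q d + g' (δ q d)) + dist g g' := by
      refine Finset.sup'_le _ _ fun d hd => ?_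
      have h2 := Finset.le_sup' (fun d => c q d + g' (δ q d)) hd
      have h3 := dist_le_pi_dist g g' (δ q d)
      rw [Real.dist_eq] at h3
      have := (abs_le.1 h3).2
      linarith
    have h4 : dist g g' / K ≤ dist g g' / 2 :=
      div_le_div_of_nonneg_left dist_nonneg (by norm_num) hK2
    calc B g q ≤ ((Finset.range K).sup' hne (fun d => c q d + g' (δ q d)) + dist g g') / K :=
          div_le_div_of_nonneg_right h1 hK0.le
      _ = B g' q + dist g g' / K := add_div _ _ _
      _ ≤ _ := by linarith
  have hcon : ContractingWith (1 / 2) B := by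
    refine ⟨by norm_num, LipschitzWith.of_dist_le_mul fun g g' => ?_⟩
    rw [dist_pi_le_iff (by positivity)]
    intro q
    rw [Real.dist_eq, abs_le]
    have h1 := hone g g' q
    have h2 := hone g' g q
    rw [dist_comm g' g] at h2
    have : ((1 / 2 : NNReal) : ℝ) = 1 / 2 := by simp
    rw [this]
    constructor <;> linarith
  let g := hcon.fixedPoint B
  have hg : ∀ q, (Finset.range K).sup' hne (fun d => c q d + g (δ q d)) = K * g q := by
    intro q
    have : B g q = g q := congrFun hcon.fixedPoint_isFixedPt q
    rw [← this]
    simp only [B]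
    field_simp
  have hD : ∀ q, ∃ d, d < K ∧ K * g q = c q d + g (δ q d) := by
    intro q
    obtain ⟨d, hd, h⟩ := Finset.exists_mem_eq_sup' hne (fun d => c q d + g (δ q d))
    exact ⟨d, Finset.mem_range.1 hd, by rw [← hg, h]⟩
  choose D hD1 hD2 using hD
  refine ⟨g, D, hD1, hD2, fun q d hd => ?_⟩
  rw [← hg]
  exact Finset.le_sup' (fun d => c q d + g (δ q d)) (Finset.mem_range.2 hd)

lemma core (K : ℕ) (hK : 2 ≤ K) (δ : Q → ℕ → Q) (st : ℕ → Q)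
    (hst : ∀ n d, d < K → st (K * n + d) = δ (st n) d) (v : Q → ℚ)
    (hv : ∀ q, ∑ d ∈ Finset.range K, v (δ q d) = K * v q) :
    ∃ β : ℚ, (∀ n : ℕ, ∑ j ∈ Finset.range n, (v (st j) : ℝ) ≤ β * n) ∧
      ∀ e : ℝ, 0 < e → ∃ n : ℕ, 1 ≤ n ∧ ∀ i : ℕ,
        ((β : ℝ) - e) * (K ^ i * n : ℕ) ≤ ∑ j ∈ Finset.range (K ^ i * n), (v (st j) : ℝ) := by
  have hK0 : (0 : ℝ) < K := by exact_mod_cast (by omega : 0 < K)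
  have hK2 : (2 : ℝ) ≤ K := by exact_mod_cast hK
  set S : ℕ → ℝ := fun n => ∑ j ∈ Finset.range n, (v (st j) : ℝ) with hS
  obtain ⟨V, hV0, hV⟩ := exists_abs_bound v
  have hSstep : ∀ n d, d < K → S (K * n + d)
      = K * S n + ∑ x ∈ Finset.range d, (v (δ (st n) x) : ℝ) := by
    intro n d hd
    simp only [hS]
    rw [Finset.sum_range_add, sum_blocks, Finset.mul_sum]
    congr 1
    · refine Finset.sum_congr rfl fun i _ => ?_
      have := hv (st i)
      have h2 : ((∑ d ∈ Finset.range K, v (δ (st i) d) : ℚ) : ℝ) = K * v (st i) := by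
        rw [this]; push_cast; ring
      rw [← h2]; push_cast
      exact Finset.sum_congr rfl fun d hd => by rw [hst _ _ (Finset.mem_range.1 hd)]
    · exact Finset.sum_congr rfl fun x hx => by
        rw [hst _ _ ((Finset.mem_range.1 hx).trans hd)]
  have hSpow : ∀ i n, S (K ^ i * n) = K ^ i * S n := by
    intro i n
    induction i with
    | zero => simp
    | succ i ih =>
      have := hSstep (K ^ i * n) 0 (by omega)
      rw [pow_succ', mul_assoc]
      simp only [add_zero, Finset.range_zero, Finset.sum_empty] at this
      rw [this, ih]; ring
  let R : Set ℝ := Set.range fun n : ℕ => S (n + 1) / ((n + 1 : ℕ) : ℝ)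
  have hRne : R.Nonempty := ⟨_, 0, rfl⟩
  have hRbdd : BddAbove R := by
    refine ⟨V, ?_⟩
    rintro _ ⟨n, rfl⟩
    have hpos : (0 : ℝ) < ((n + 1 : ℕ) : ℝ) := by positivity
    show S (n + 1) / ((n + 1 : ℕ) : ℝ) ≤ V
    rw [div_le_iff₀ hpos]
    calc S (n + 1) ≤ ∑ j ∈ Finset.range (n + 1), (V : ℝ) := Finset.sum_le_sum fun j _ => by
          exact_mod_cast (abs_le.1 (hV (st j))).2
      _ = _ := by simp; ring
  set β := sSup R with hβ
  have hle : ∀ n : ℕ, S n ≤ β * n := by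
    intro n
    rcases n with _ | n
    · simp [hS]
    · have hpos : (0 : ℝ) < ((n + 1 : ℕ) : ℝ) := by positivity
      exact (div_le_iff₀ hpos).1 (le_csSup hRbdd ⟨n, rfl⟩)
  have hex : ∀ e : ℝ, 0 < e → ∃ n : ℕ, 1 ≤ n ∧ (β - e) * n < S n := by
    intro e he
    obtain ⟨_, ⟨n, rfl⟩, h⟩ := exists_lt_of_lt_csSup hRne (show β - e < sSup R by linarith)
    have hpos : (0 : ℝ) < ((n + 1 : ℕ) : ℝ) := by positivity
    exact ⟨n + 1, by omega, (lt_div_iff₀ hpos).1 h⟩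
  -- Bellman
  obtain ⟨g, D, hD, hgD, hgle⟩ := exists_bellman K hK δ
    (fun q d => ∑ x ∈ Finset.range d, (v (δ q x) : ℝ) - β * d)
  obtain ⟨G, hG0, hG⟩ := exists_abs_bound g
  let Φ : ℕ → ℝ := fun n => S n - β * n + g (st n)
  have hΦle : ∀ n d, d < K → Φ (K * n + d) ≤ K * Φ n := by
    intro n d hd
    simp only [Φ]
    rw [hSstep n d hd, hst n d hd]
    have := hgle (st n) d hd
    push_cast
    nlinarith
  have hΦeq : ∀ n, Φ (K * n + D (st n)) = K * Φ n := by
    intro n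
    simp only [Φ]
    rw [hSstep n _ (hD _), hst n _ (hD _)]
    have := hgD (st n)
    push_cast
    nlinarith
  have hΦbd : ∀ n, Φ n ≤ G := by
    intro n
    have := hle n
    have := (abs_le.1 (hG (st n))).2
    simp only [Φ]; linarith
  have hΦ0 : ∀ n, Φ n ≤ 0 := by
    intro n
    by_contra! hpos
    have : ∀ i : ℕ, ∃ n', Φ n' = K ^ i * Φ n := by
      intro i
      induction i with
      | zero => exact ⟨n, by simp⟩
      | succ i ih =>
        obtain ⟨n', h⟩ := ih
        exact ⟨_, by rw [hΦeq n', h]; ring⟩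
    obtain ⟨i, hi⟩ := pow_unbounded_of_one_lt (G / Φ n) (show (1 : ℝ) < K by linarith)
    obtain ⟨n', h⟩ := this i
    rw [div_lt_iff₀ hpos] at hi
    have := hΦbd n'
    linarith
  -- some leading digit is optimal
  obtain ⟨a, ha1, haK, ha⟩ : ∃ a, 1 ≤ a ∧ a < K ∧ Φ a = 0 := by
    by_contra! hne
    obtain ⟨ε, hε, hεa⟩ := exists_pos_le (Finset.Ico 1 K) (fun a => -Φ a / ((a : ℝ) + 1)) (by
      intro a ha
      rw [Finset.mem_Ico] at ha
      have := lt_of_le_of_ne (hΦ0 a) (hne a ha.1 ha.2)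
      exact div_pos (by linarith) (by positivity))
    have hind : ∀ n, 1 ≤ n → Φ n ≤ -ε * (n + 1) := by
      intro n
      induction n using Nat.strong_induction_on with
      | _ n ih =>
        intro hn
        rcases lt_or_ge n K with h | h
        · have := hεa n (Finset.mem_Ico.2 ⟨hn, h⟩)
          rw [le_div_iff₀ (by positivity)] at this
          linarith
        · have h1 := Nat.div_add_mod n K
          have hlt := Nat.mod_lt n (show 0 < K by omega)
          have h2 : 1 ≤ n / K := (Nat.one_le_div_iff (by omega)).2 h
          have h3 := ih (n / K) (Nat.div_lt_self (by omega) (by omega)) h2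
          have h4 := hΦle (n / K) (n % K) hlt
          rw [h1] at h4
          have h5 : (n : ℝ) + 1 ≤ K * ((n / K : ℕ) + 1) := by
            have : n + 1 ≤ K * (n / K + 1) := by rw [mul_add]; omega
            exact_mod_cast this
          have h6 : K * Φ (n / K) ≤ K * (-ε * ((n / K : ℕ) + 1)) :=
            mul_le_mul_of_nonneg_left h3 hK0.le
          nlinarith
    obtain ⟨n, hn, hlt⟩ := hex ε hε
    set t := S n - (β - ε) * n with ht
    have htpos : 0 < t := by linarith
    obtain ⟨i, hi⟩ := pow_unbounded_of_one_lt (G / t) (show (1 : ℝ) < K by linarith)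
    rw [div_lt_iff₀ htpos] at hi
    have h1 := hind (K ^ i * n) (Nat.mul_pos (Nat.pow_pos (by omega)) hn)
    simp only [Φ] at h1
    rw [hSpow] at h1
    have h2 := (abs_le.1 (hG (st (K ^ i * n)))).1
    push_cast at h1
    have h3 : (K : ℝ) ^ i * t = K ^ i * S n - β * (K ^ i * n) + ε * (K ^ i * n) := by
      rw [ht]; ring
    nlinarith
  -- solve for β
  obtain ⟨X, hX⟩ := exists_solve K hK (fun q => δ q (D q))
    (fun q => ∑ x ∈ Finset.range (D q), v (δ q x))
  obtain ⟨Y, hY⟩ := exists_solve K hK (fun q => δ q (D q)) (fun q => (D q : ℚ))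
  have hY0 := solve_nonneg K hK (fun q => δ q (D q)) (fun q => (D q : ℚ)) Y
    (fun q => by positivity) hY
  have hgXY : (fun q => g q - (X q - β * Y q) : Q → ℝ) = 0 := by
    refine eq_zero_of_shift K hK (fun q => δ q (D q)) _ fun q => ?_
    have h1 := hgD q
    have h2 : (K : ℝ) * X q = ∑ x ∈ Finset.range (D q), (v (δ q x) : ℝ) + X (δ q (D q)) := by
      exact_mod_cast hX q
    have h3 : (K : ℝ) * Y q = D q + Y (δ q (D q)) := by exact_mod_cast hY q
    have h4 : (K : ℝ) * (g q - (X q - β * Y q)) = K * g q - K * X q + β * (K * Y q) := by ring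
    rw [h4, h1, h2, h3]; ring
  have hga : g (st a) = X (st a) - β * Y (st a) := by
    have := congrFun hgXY (st a)
    simp only [Pi.zero_apply] at this
    linarith
  have hβq : β = (((∑ j ∈ Finset.range a, v (st j)) + X (st a)) / (a + Y (st a)) : ℚ) := by
    have hposq : (0 : ℚ) < a + Y (st a) := by
      have := hY0 (st a)
      have : (1 : ℚ) ≤ a := by exact_mod_cast ha1
      linarith
    have hpos : (0 : ℝ) < a + Y (st a) := by exact_mod_cast hposq
    push_cast
    rw [eq_div_iff hpos.ne']
    simp only [Φ, hS] at ha
    rw [hga] at ha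
    linarith
  refine ⟨((∑ j ∈ Finset.range a, v (st j)) + X (st a)) / (a + Y (st a)), ?_, ?_⟩
  · intro n; rw [← hβq]; exact hle n
  · intro e he
    obtain ⟨n, hn, h⟩ := hex e he
    refine ⟨n, hn, fun i => ?_⟩
    rw [← hβq]
    show _ ≤ S (K ^ i * n)
    rw [hSpow]
    have : (0 : ℝ) < K ^ i := by positivity
    push_cast
    nlinarith

lemma limsup_eq_aux (f : ℕ → ℝ) (β : ℝ) (h1 : ∀ e : ℝ, 0 < e → ∀ᶠ n in atTop, f n ≤ β + e)
    (h2 : ∀ e : ℝ, 0 < e → ∃ᶠ n in atTop, β - e ≤ f n) : atTop.limsup f = β := by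
  have hb : IsBoundedUnder (· ≤ ·) atTop f := ⟨β + 1, by simpa using h1 1 one_pos⟩
  have hc : IsCoboundedUnder (· ≤ ·) atTop f :=
    IsCoboundedUnder.of_frequently_ge (h2 1 one_pos)
  refine le_antisymm ?_ ?_
  · exact le_of_forall_pos_le_add fun e he => limsup_le_of_le hc (h1 e he)
  · refine le_of_forall_pos_le_add fun e he => ?_
    have := le_limsup_of_frequently_le (h2 e he) hb
    linarith

/-- Normal form: the state of `n`, insensitive to leading zeros. -/
lemma exists_states {Δ : Type*} (k : ℕ) (hk : 2 ≤ k) (h : ℕ → Δ) (hauto : IsAutomaticSeq k h) :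
    ∃ (Q : Type) (_ : Fintype Q) (δ : Q → ℕ → Q) (st : ℕ → Q) (τ : Q → Δ),
      (∀ n d, d < k → st (k * n + d) = δ (st n) d) ∧ ∀ n, h n = τ (st n) := by
  obtain ⟨Q, hQ, q₀, δ, τ, H⟩ := hauto
  refine ⟨Option Q, inferInstance,
    fun o d => o.elim (if d = 0 then none else some (δ q₀ d)) (fun q => some (δ q d)),
    fun n => if n = 0 then none else some (((Nat.digits k n).reverse).foldl δ q₀),
    fun o => o.elim (τ q₀) τ, ?_, ?_⟩
  · intro n d hd
    by_cases hn : n = 0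
    · subst hn
      by_cases hd0 : d = 0
      · simp [hd0]
      · simp [hd0, Nat.digits_of_lt k d hd0 hd]
    · have h1 : k * n + d ≠ 0 := by
        have : 0 < k * n := Nat.mul_pos (by omega) (Nat.pos_of_ne_zero hn)
        omega
      have h2 : Nat.digits k (k * n + d) = d :: Nat.digits k n := by
        rw [add_comm]
        exact Nat.digits_add k (by omega) d n hd (Or.inr hn)
      simp [hn, h2, show k ≠ 0 by omega]
  · intro n
    by_cases hn : n = 0
    · subst hn; simp [H 0]
    · simp [hn, H n]

end UDR

theorem upper_density_partial_sums_rational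
    (k : ℕ) (hk : 2 ≤ k) (h : ℕ → ℚ) (hauto : IsAutomaticSeq k h)
    (hnn : ∀ n, 0 ≤ h n)
    (s : ℕ → ℚ) (hs : ∀ n, s n = ∑ j ∈ Finset.range n, h j) :
    ∃ q : ℚ, Filter.atTop.limsup (fun n : ℕ => (s n : ℝ) / n) = (q : ℝ) := by
  classical
  obtain ⟨Q, hQ, δ, st, τ, hst, hτ⟩ := UDR.exists_states k hk h hauto
  have : Nonempty Q := ⟨st 0⟩
  have hk0 : 0 < k := by omega
  have hP := UDR.trans_sto k hk0 δ
  obtain ⟨p, hp, hsupp⟩ := UDR.exists_pow_supp hP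
  obtain ⟨δ', hst', hsum⟩ := UDR.exists_pow_trans k hk0 δ st hst p
  obtain ⟨v, hv, hconv⟩ := UDR.exists_harmonic (hP.pow p) hsupp τ
  have hK : 2 ≤ k ^ p := hk.trans (Nat.le_self_pow (by omega) k)
  obtain ⟨β, hle, hge⟩ := UDR.core (k ^ p) hK δ' st hst' v
    (fun q => by rw [hsum, hv])
  refine ⟨β, ?_⟩
  -- the sums for `h` and for `v` differ by `o(n)`
  have herr : ∀ e : ℚ, 0 < e → ∃ C : ℝ, ∀ n : ℕ,
      |(s n : ℝ) - ∑ j ∈ Finset.range n, (v (st j) : ℝ)| ≤ e * n + C := by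
    intro e he
    obtain ⟨m, hm⟩ := hconv e he
    obtain ⟨C, hC⟩ := UDR.error_bound (k ^ p) (by omega) δ' st hst' _ hsum e he m (τ - v) hm
    refine ⟨C, fun n => ?_⟩
    have h1 : (s n : ℝ) - ∑ j ∈ Finset.range n, (v (st j) : ℝ)
        = ((∑ j ∈ Finset.range n, (τ - v) (st j) : ℚ) : ℝ) := by
      rw [hs]; push_cast
      rw [← Finset.sum_sub_distrib]
      exact Finset.sum_congr rfl fun j _ => by simp [hτ]
    rw [h1]
    exact_mod_cast hC n
  have herr2 : ∀ e : ℝ, 0 < e → ∀ᶠ n : ℕ in atTop,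
      |(s n : ℝ) - ∑ j ∈ Finset.range n, (v (st j) : ℝ)| ≤ e * n := by
    intro e he
    obtain ⟨e', he', hlt⟩ := exists_rat_btwn he
    obtain ⟨C, hC⟩ := herr e' (by exact_mod_cast he')
    obtain ⟨N, hN⟩ := exists_nat_gt (C / (e - e'))
    rw [div_lt_iff₀ (by linarith)] at hN
    filter_upwards [eventually_ge_atTop N] with n hn
    have h1 := hC n
    have h2 : (N : ℝ) ≤ n := by exact_mod_cast hn
    nlinarith
  apply UDR.limsup_eq_aux
  · intro e he
    filter_upwards [herr2 e he, eventually_ge_atTop 1] with n hn h1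
    have hpos : (0 : ℝ) < n := by exact_mod_cast h1
    rw [div_le_iff₀ hpos]
    have := hle n
    have := (abs_le.1 hn).2
    linarith
  · intro e he
    obtain ⟨n, hn1, hn⟩ := hge (e / 2) (by linarith)
    obtain ⟨N, hN⟩ := eventually_atTop.1 (herr2 (e / 2) (by linarith))
    rw [frequently_atTop]
    intro M
    obtain ⟨i, hi⟩ : ∃ i : ℕ, max M N ≤ (k ^ p) ^ i * n :=
      ⟨max M N, (Nat.lt_pow_self (by omega)).le.trans (Nat.le_mul_of_pos_right _ hn1)⟩
    refine ⟨(k ^ p) ^ i * n, (le_max_left _ _).trans hi, ?_⟩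
    have h1 := hn i
    have h2 := (abs_le.1 (hN _ ((le_max_right _ _).trans hi))).1
    have hpos : (0 : ℝ) < ((k ^ p) ^ i * n : ℕ) := by
      exact_mod_cast Nat.mul_pos (Nat.pow_pos (by omega)) hn1
    rw [le_div_iff₀ hpos]
    linarith
end

section
/- Let k ≥ 2 be a natural number and let S ⊆ ℕ be a k-automatic set. Then the upper density of S, limsup_{N→∞} π_S(N)/N, is a rational number. -/
open Filter

/-- A set `S ⊆ ℕ` is `k`-automatic if its characteristic function is `k`-automatic. -/
def IsAutomaticSet (k : ℕ) (S : Set ℕ) : Prop :=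
  IsAutomaticSeq k (S.indicator fun _ => (1 : ℕ))

/-- `piCount S N` is the number of elements of `S` that are less than `N`. -/
noncomputable def piCount (S : Set ℕ) (N : ℕ) : ℕ := (S ∩ Set.Iio N).ncard


/-- averaging operator -/
def Bop {Q : Type} (F : Type) [Field F] (K : ℕ) (δ : Q → ℕ → Q) : (Q → F) →ₗ[F] (Q → F) where
  toFun u q := (∑ d ∈ Finset.range K, u (δ q d)) / (K : F)
  map_add' u v := by
    funext q
    simp [Finset.sum_add_distrib, add_div]
  map_smul' c u := by
    funext q
    simp [← Finset.mul_sum, mul_div_assoc]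

lemma Bop_apply {Q : Type} (F : Type) [Field F] (K : ℕ) (δ : Q → ℕ → Q) (u : Q → F) (q : Q) :
    Bop F K δ u q = (∑ d ∈ Finset.range K, u (δ q d)) / (K : F) := rfl

lemma Bop_le {Q : Type} {K : ℕ} (hK : 2 ≤ K) (δ : Q → ℕ → Q) (u : Q → ℝ) (c : ℝ)
    (h : ∀ q, u q ≤ c) (q : Q) : Bop ℝ K δ u q ≤ c - (c - u (δ q 0)) / K := by
  have hK0 : (0:ℝ) < K := by positivity
  obtain ⟨L, rfl⟩ : ∃ L, K = L + 1 := ⟨K - 1, by omega⟩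
  rw [Bop_apply, Finset.sum_range_succ']
  have h1 : ∑ d ∈ Finset.range L, u (δ q (d+1)) ≤ L * c := by
    calc _ ≤ ∑ d ∈ Finset.range L, c := Finset.sum_le_sum (fun i _ => h _)
      _ = _ := by simp
  rw [div_le_iff₀ hK0, sub_mul, div_mul_cancel₀ _ hK0.ne']
  push_cast
  linarith

lemma Bop_le' {Q : Type} {K : ℕ} (hK : 2 ≤ K) (δ : Q → ℕ → Q) (u : Q → ℝ) (c : ℝ)
    (h : ∀ q, u q ≤ c) (q : Q) : Bop ℝ K δ u q ≤ c := by
  refine (Bop_le hK δ u c h q).trans ?_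
  have := div_nonneg (sub_nonneg.2 (h (δ q 0))) (Nat.cast_nonneg K)
  linarith

lemma Bop_pow_le' {Q : Type} {K : ℕ} (hK : 2 ≤ K) (δ : Q → ℕ → Q) (c : ℝ) (j : ℕ) :
    ∀ (u : Q → ℝ), (∀ q, u q ≤ c) → ∀ (q : Q), (Bop ℝ K δ ^ j) u q ≤ c := by
  induction j with
  | zero => intro u h q; simpa using h q
  | succ j ih =>
    intro u h q
    rw [pow_succ, Module.End.mul_apply]
    exact ih _ (Bop_le' hK δ u c h) q

lemma Bop_pow_le {Q : Type} {K : ℕ} (hK : 2 ≤ K) (δ : Q → ℕ → Q)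
    (hδ : ∀ q, δ (δ q 0) 0 = δ q 0) (c : ℝ) (j : ℕ) :
    ∀ (u : Q → ℝ), (∀ q, u q ≤ c) → ∀ (q : Q),
    (Bop ℝ K δ ^ (j+1)) u q ≤ c - (c - u (δ q 0)) / K ^ (j+1) := by
  have hK0 : (0:ℝ) < K := by positivity
  induction j with
  | zero => intro u h q; simpa using Bop_le hK δ u c h q
  | succ j ih =>
    intro u h q
    rw [pow_succ, Module.End.mul_apply]
    refine (ih _ (Bop_le' hK δ u c h) q).trans ?_
    have := Bop_le hK δ u c h (δ q 0)
    rw [hδ] at this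
    have h2 : (c - u (δ q 0)) / K ^ (j+1+1) ≤ (c - Bop ℝ K δ u (δ q 0)) / K ^ (j+1) := by
      rw [pow_succ (K:ℝ) (j+1), mul_comm, ← div_div]
      gcongr
      linarith
    linarith

lemma upper_decay {Q : Type} [Fintype Q] {K : ℕ} (hK : 2 ≤ K) (δ : Q → ℕ → Q)
    (hδ : ∀ q, δ (δ q 0) 0 = δ q 0) (u : Q → ℝ) (ε : ℝ) (hε : 0 < ε) :
    ∃ n, ∀ q, (Bop ℝ K δ ^ n) (Bop ℝ K δ u - u) q ≤ ε := by
  by_contra! hcon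
  obtain ⟨q0, -⟩ := hcon 0
  have hne : (Finset.univ : Finset Q).Nonempty := ⟨q0, Finset.mem_univ _⟩
  have hK0 : (0:ℝ) < K := by positivity
  set B := Bop ℝ K δ with hB
  set g : ℕ → Q → ℝ := fun n => (B ^ n) (B u - u) with hg
  have gadd : ∀ i j, g (i + j) = (B ^ j) (g i) := by
    intro i j
    simp only [hg]
    rw [add_comm, pow_add, Module.End.mul_apply]
  set G : ℕ → ℝ := fun n => Finset.univ.sup' hne (g n) with hG
  have gG : ∀ n q, g n q ≤ G n := fun n q => Finset.le_sup' (g n) (Finset.mem_univ q)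
  have hGanti : Antitone G := by
    apply antitone_nat_of_succ_le
    intro n
    refine Finset.sup'_le _ _ (fun q _ => ?_)
    rw [gadd n 1, pow_one]
    exact Bop_le' hK δ _ _ (gG n) q
  have hGε : ∀ n, ε ≤ G n := by
    intro n
    obtain ⟨q, hq⟩ := hcon n
    exact hq.le.trans (gG n q)
  have hbdd : BddBelow (Set.range G) := ⟨ε, by rintro _ ⟨n, rfl⟩; exact hGε n⟩
  set M := ⨅ n, G n with hM
  have hεM : ε ≤ M := le_ciInf hGε
  have hMG : ∀ n, M ≤ G n := fun n => ciInf_le hbdd n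
  have hM0 : 0 < M := hε.trans_le hεM
  -- bound of u
  obtain ⟨U, hU⟩ : ∃ U : ℝ, ∀ q, |u q| ≤ U :=
    ⟨∑ q, |u q|, fun q => Finset.single_le_sum (f := fun q => |u q|) (fun _ _ => abs_nonneg _) (Finset.mem_univ q)⟩
  have hU1 : ∀ n q, (B ^ n) u q ≤ U := fun n =>
    Bop_pow_le' hK δ U n u (fun q => (le_abs_self _).trans (hU q))
  have hU2 : ∀ n q, -U ≤ (B ^ n) u q := by
    intro n q
    have := Bop_pow_le' hK δ U n (-u) (fun q => (neg_le_abs _).trans (hU q)) q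
    rw [map_neg, Pi.neg_apply] at this
    linarith
  obtain ⟨N, hN⟩ := exists_nat_gt (2 * U / (M / 2))
  rw [div_lt_iff₀ (by positivity)] at hN
  set η := M / 2 / K ^ N with hη
  have hη0 : 0 < η := by positivity
  obtain ⟨n, hn⟩ : ∃ n, G n < M + η := exists_lt_of_ciInf_lt (by linarith)
  obtain ⟨x, -, hx⟩ := Finset.exists_mem_eq_sup' hne (g (n + N))
  have hx' : M ≤ g (n + N) x := by rw [← hx]; exact hMG _
  have key : ∀ i < N, M / 2 ≤ g (n + i) (δ x 0) := by
    intro i hi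
    obtain ⟨j, rfl⟩ : ∃ j, N = i + (j + 1) := ⟨N - i - 1, by omega⟩
    rw [← add_assoc, gadd (n+i) (j+1)] at hx'
    have h1 := Bop_pow_le hK δ hδ (M + η) j (g (n+i))
      (fun q => (gG _ q).trans ((hGanti (Nat.le_add_right n i)).trans hn.le)) x
    have h2 : (M + η - g (n+i) (δ x 0)) / K ^ (j+1) ≤ η := by linarith
    rw [div_le_iff₀ (by positivity)] at h2
    have h3 : η * (K:ℝ) ^ (j+1) ≤ η * K ^ (i + (j+1)) := by
      refine mul_le_mul_of_nonneg_left (pow_le_pow_right₀ ?_ (by omega)) hη0.le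
      exact_mod_cast (by omega : 1 ≤ K)
    have h4 : η * (K:ℝ) ^ (i + (j+1)) = M / 2 := div_mul_cancel₀ _ (by positivity)
    linarith
  have tele : ∀ m, m ≤ N → m * (M / 2) ≤ (B ^ (n + m)) u (δ x 0) - (B ^ n) u (δ x 0) := by
    intro m
    induction m with
    | zero => intro _; simp
    | succ m ih =>
      intro hm
      have h1 := ih (by omega)
      have h2 := key m (by omega)
      have h3 : g (n + m) (δ x 0) = (B ^ (n + (m+1))) u (δ x 0) - (B ^ (n+m)) u (δ x 0) := by
        simp only [hg, map_sub, Pi.sub_apply]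
        rw [← add_assoc, pow_succ, Module.End.mul_apply]
      push_cast
      linarith
  have := tele N le_rfl
  have := hU1 (n+N) (δ x 0)
  have := hU2 n (δ x 0)
  linarith

lemma decay {Q : Type} [Fintype Q] {K : ℕ} (hK : 2 ≤ K) (δ : Q → ℕ → Q)
    (hδ : ∀ q, δ (δ q 0) 0 = δ q 0) (u : Q → ℝ) (ε : ℝ) (hε : 0 < ε) :
    ∃ n, ∀ m, n ≤ m → ∀ q, |(Bop ℝ K δ ^ m) (Bop ℝ K δ u - u) q| ≤ ε := by
  obtain ⟨n1, h1⟩ := upper_decay hK δ hδ u ε hε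
  obtain ⟨n2, h2⟩ := upper_decay hK δ hδ (-u) ε hε
  refine ⟨max n1 n2, fun m hm q => ?_⟩
  obtain ⟨j1, rfl⟩ : ∃ j, m = j + n1 := ⟨m - n1, by have := le_max_left n1 n2; omega⟩
  have e1 := Bop_pow_le' hK δ ε j1 _ h1 q
  rw [← Module.End.mul_apply, ← pow_add] at e1
  obtain ⟨j2, hj⟩ : ∃ j, j1 + n1 = j + n2 := ⟨j1 + n1 - n2, by have := le_max_right n1 n2; omega⟩
  have e2 := Bop_pow_le' hK δ ε j2 _ h2 q
  rw [← Module.End.mul_apply, ← pow_add, ← hj] at e2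
  have e3 : Bop ℝ K δ (-u) - -u = -(Bop ℝ K δ u - u) := by
    rw [map_neg]; abel
  rw [e3, map_neg, Pi.neg_apply] at e2
  exact abs_le.2 ⟨by linarith, e1⟩

lemma Bop_cast {Q : Type} (K : ℕ) (δ : Q → ℕ → Q) (u : Q → ℚ) :
    Bop ℝ K δ (fun q => (u q : ℝ)) = fun q => ((Bop ℚ K δ u q : ℚ) : ℝ) := by
  funext q
  simp [Bop_apply]

lemma Bop_pow_fix {Q : Type} (K : ℕ) (δ : Q → ℕ → Q) (a : Q → ℝ) (h : Bop ℝ K δ a = a) (n : ℕ) :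
    (Bop ℝ K δ ^ n) a = a := by
  induction n with
  | zero => simp
  | succ n ih => rw [pow_succ, Module.End.mul_apply, h, ih]

lemma exists_limit {Q : Type} [Fintype Q] {K : ℕ} (hK : 2 ≤ K) (δ : Q → ℕ → Q)
    (hδ : ∀ q, δ (δ q 0) 0 = δ q 0) (v : Q → ℚ) :
    ∃ a : Q → ℚ, Bop ℚ K δ a = a ∧ ∀ ε : ℝ, 0 < ε → ∃ m, ∀ q,
      |(Bop ℝ K δ ^ m) (fun q => (v q : ℝ) - (a q : ℝ)) q| ≤ ε := by
  set T : (Q → ℚ) →ₗ[ℚ] (Q → ℚ) := Bop ℚ K δ - 1 with hT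
  have hTa : ∀ u, T u = Bop ℚ K δ u - u := fun u => rfl
  have hcast : ∀ u : Q → ℚ, Bop ℝ K δ (fun q => (u q : ℝ)) - (fun q => (u q : ℝ)) = fun q => ((T u q : ℚ) : ℝ) := by
    intro u
    rw [Bop_cast]
    funext q
    simp [hTa]
  have hdis : Disjoint (LinearMap.ker T) (LinearMap.range T) := by
    rw [Submodule.disjoint_def]
    rintro w hw ⟨u, rfl⟩
    rw [LinearMap.mem_ker, hTa, sub_eq_zero] at hw
    funext q
    by_contra hne
    have hpos : (0:ℝ) < |((T u q : ℚ) : ℝ)| := by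
      rw [abs_pos]; exact_mod_cast hne
    obtain ⟨n, hn⟩ := decay hK δ hδ (fun q => (u q : ℝ)) (|((T u q : ℚ) : ℝ)| / 2) (by positivity)
    have := hn n le_rfl q
    rw [hcast, Bop_pow_fix] at this
    · linarith
    · rw [Bop_cast, hw]
  have hcompl : LinearMap.ker T ⊔ LinearMap.range T = ⊤ := by
    apply Submodule.eq_top_of_disjoint _ _ _ hdis
    rw [add_comm]
    exact (LinearMap.finrank_range_add_finrank_ker T).ge
  have hv : v ∈ LinearMap.ker T ⊔ LinearMap.range T := by rw [hcompl]; trivial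
  obtain ⟨a, ha, _, ⟨u, rfl⟩, hau⟩ := Submodule.mem_sup.1 hv
  refine ⟨a, ?_, ?_⟩
  · rwa [LinearMap.mem_ker, hTa, sub_eq_zero] at ha
  · intro ε hε
    obtain ⟨n, hn⟩ := decay hK δ hδ (fun q => (u q : ℝ)) ε hε
    refine ⟨n, fun q => ?_⟩
    have h1 := hn n le_rfl q
    rw [hcast] at h1
    have : (fun q => (v q : ℝ) - (a q : ℝ)) = fun q => ((T u q : ℚ) : ℝ) := by
      funext q
      rw [← hau]
      simp
    rw [this]
    exact h1

lemma sum_scale {Q : Type} (F : Type) [Field F] [CharZero F] {K : ℕ} (hK : 2 ≤ K) (δ : Q → ℕ → Q)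
    (s : ℕ → Q) (hs : ∀ n d, d < K → s (K * n + d) = δ (s n) d) (u : Q → F) (N : ℕ) :
    ∑ n ∈ Finset.range (K * N), u (s n) = K * ∑ n ∈ Finset.range N, Bop F K δ u (s n) := by
  have hK0 : (K : F) ≠ 0 := by exact_mod_cast (by omega : K ≠ 0)
  induction N with
  | zero => simp
  | succ N ih =>
    rw [mul_add, mul_one, Finset.sum_range_add, ih, Finset.sum_range_succ, mul_add, Bop_apply,
      mul_div_cancel₀ _ hK0]
    congr 1
    exact Finset.sum_congr rfl (fun d hd => by rw [hs N d (Finset.mem_range.1 hd)])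

lemma sum_scale_pow {Q : Type} {K : ℕ} (hK : 2 ≤ K) (δ : Q → ℕ → Q)
    (s : ℕ → Q) (hs : ∀ n d, d < K → s (K * n + d) = δ (s n) d) (m N : ℕ) : ∀ u : Q → ℝ,
    ∑ n ∈ Finset.range (K ^ m * N), u (s n)
      = (K:ℝ) ^ m * ∑ n ∈ Finset.range N, (Bop ℝ K δ ^ m) u (s n) := by
  induction m with
  | zero => simp
  | succ m ih =>
    intro u
    rw [pow_succ', mul_assoc, sum_scale ℝ hK δ s hs, ih, ← mul_assoc, ← pow_succ']
    simp only [pow_succ (Bop ℝ K δ), Module.End.mul_apply]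

lemma exists_bound {Q : Type} [Fintype Q] (u : Q → ℝ) : ∃ C : ℝ, 0 ≤ C ∧ ∀ q, |u q| ≤ C :=
  ⟨∑ q, |u q|, Finset.sum_nonneg (fun _ _ => abs_nonneg _),
    fun q => Finset.single_le_sum (f := fun q => |u q|) (fun _ _ => abs_nonneg _) (Finset.mem_univ q)⟩

lemma abs_sum_le {Q : Type} (u : Q → ℝ) (C : ℝ) (hC : ∀ q, |u q| ≤ C) (s : ℕ → Q) (N : ℕ) :
    |∑ n ∈ Finset.range N, u (s n)| ≤ N * C := by
  refine (Finset.abs_sum_le_sum_abs _ _).trans ?_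
  refine (Finset.sum_le_sum (fun i _ => hC (s i))).trans ?_
  simp

lemma small_weighted_sum {Q : Type} [Fintype Q] {K : ℕ} (hK : 2 ≤ K) (δ : Q → ℕ → Q)
    (s : ℕ → Q) (hs : ∀ n d, d < K → s (K * n + d) = δ (s n) d) (e : Q → ℝ)
    (he : ∀ ε : ℝ, 0 < ε → ∃ m, ∀ q, |(Bop ℝ K δ ^ m) e q| ≤ ε) (ε : ℝ) (hε : 0 < ε) :
    ∀ᶠ N : ℕ in atTop, |∑ n ∈ Finset.range N, e (s n)| ≤ ε * N := by
  obtain ⟨m, hm⟩ := he (ε / 2) (by positivity)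
  obtain ⟨C, hC0, hC⟩ := exists_bound e
  obtain ⟨N0, hN0⟩ := exists_nat_gt (K ^ m * C / (ε / 2))
  rw [div_lt_iff₀ (by positivity)] at hN0
  filter_upwards [eventually_ge_atTop N0] with N hN
  have hKm : 0 < K ^ m := by positivity
  have hdiv := Nat.div_add_mod N (K ^ m)
  have hr := Nat.mod_lt N hKm
  set M := N / K ^ m
  set r := N % K ^ m
  have h1 : ∑ n ∈ Finset.range N, e (s n) = (K:ℝ) ^ m * ∑ n ∈ Finset.range M, (Bop ℝ K δ ^ m) e (s n)
      + ∑ n ∈ Finset.range r, e (s (K ^ m * M + n)) := by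
    rw [← sum_scale_pow hK δ s hs, ← Finset.sum_range_add, hdiv]
  have h2 := abs_sum_le _ _ hm s M
  have h3 := abs_sum_le e C hC (fun n => s (K ^ m * M + n)) r
  have h4 : (r:ℝ) * C ≤ K ^ m * C := by
    gcongr
    exact_mod_cast hr.le
  have h5 : (K:ℝ) ^ m * M ≤ N := by
    exact_mod_cast (Nat.mul_div_le N (K ^ m) : K ^ m * M ≤ N)
  have h6 : (N0:ℝ) ≤ N := by exact_mod_cast hN
  rw [h1]
  calc _ ≤ |(K:ℝ) ^ m * ∑ n ∈ Finset.range M, (Bop ℝ K δ ^ m) e (s n)| + |∑ n ∈ Finset.range r, e (s (K ^ m * M + n))| := abs_add_le _ _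
    _ ≤ (K:ℝ) ^ m * (M * (ε / 2)) + K ^ m * C := by
      rw [abs_mul, abs_of_nonneg (by positivity : (0:ℝ) ≤ (K:ℝ)^m)]
      gcongr
      exact h3.trans h4
    _ = (K:ℝ) ^ m * M * (ε / 2) + K ^ m * C := by ring
    _ ≤ N * (ε / 2) + N0 * (ε / 2) := by gcongr
    _ ≤ N * (ε / 2) + N * (ε / 2) := by gcongr
    _ = ε * N := by ring

/-- uniqueness for the policy equation -/
lemma policy_inj {Q : Type} [Fintype Q] {K : ℕ} (hK : 2 ≤ K) (σ : Q → Q)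
    (x : Q → ℝ) (hx : ∀ q, K * x q = x (σ q)) : x = 0 := by
  funext q0
  obtain ⟨q, -, hq⟩ := Finset.exists_max_image Finset.univ (fun q => |x q|) ⟨q0, Finset.mem_univ _⟩
  have h1 := hq (σ q) (Finset.mem_univ _)
  have hK' : (2:ℝ) ≤ K := by exact_mod_cast hK
  simp only [← hx q, abs_mul, Nat.abs_cast] at h1
  have h2 := abs_nonneg (x q)
  have h3 : |x q| = 0 := by nlinarith
  have h4 := hq q0 (Finset.mem_univ _)
  simp only [h3] at h4
  exact abs_nonpos_iff.1 h4

lemma policy_solve {Q : Type} [Fintype Q] {K : ℕ} (hK : 2 ≤ K) (σ : Q → Q)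
    (w : Q → ℚ) : ∃ x : Q → ℚ, ∀ q, K * x q = w q + x (σ q) := by
  let T : (Q → ℚ) →ₗ[ℚ] (Q → ℚ) :=
    { toFun := fun x q => K * x q - x (σ q)
      map_add' := by intro x y; funext q; simp; ring
      map_smul' := by intro c x; funext q; simp; ring }
  have hT : ∀ x q, T x q = K * x q - x (σ q) := fun _ _ => rfl
  have hinj : Function.Injective T := by
    rw [injective_iff_map_eq_zero]
    intro x hx
    have := policy_inj hK σ (fun q => (x q : ℝ)) (fun q => by
      have h1 := congrFun hx q
      rw [hT, Pi.zero_apply, sub_eq_zero] at h1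
      exact_mod_cast h1)
    funext q
    have h2 := congrFun this q
    simpa using h2
  obtain ⟨x, hx⟩ := LinearMap.injective_iff_surjective.1 hinj w
  refine ⟨x, fun q => ?_⟩
  have := congrFun hx q
  rw [hT] at this
  linarith

lemma policy_nonneg {Q : Type} [Fintype Q] {K : ℕ} (hK : 2 ≤ K) (σ : Q → Q)
    (w x : Q → ℚ) (hw : ∀ q, 0 ≤ w q) (hx : ∀ q, K * x q = w q + x (σ q)) (q0 : Q) : 0 ≤ x q0 := by
  obtain ⟨q, -, hq⟩ := Finset.exists_min_image Finset.univ x ⟨q0, Finset.mem_univ _⟩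
  have h1 := hq (σ q) (Finset.mem_univ _)
  have h2 := hq q0 (Finset.mem_univ _)
  have h3 := hx q
  have h4 := hw q
  have hK' : (2:ℚ) ≤ K := by exact_mod_cast hK
  by_contra hneg
  push Not at hneg
  nlinarith

lemma bellman {Q : Type} [Fintype Q] {K : ℕ} (hK : 2 ≤ K) (δ : Q → ℕ → Q) (w : Q → ℕ → ℝ) :
    ∃ (M : Q → ℝ) (g : Q → ℕ), (∀ q, g q < K) ∧ (∀ q d, d < K → w q d + M (δ q d) ≤ K * M q) ∧
      ∀ q, K * M q = w q (g q) + M (δ q (g q)) := by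
  have hne : (Finset.range K).Nonempty := ⟨0, by simp; omega⟩
  have hK0 : (0:ℝ) < K := by positivity
  let T : (Q → ℝ) → (Q → ℝ) := fun M q => (Finset.range K).sup' hne (fun d => (w q d + M (δ q d)) / K)
  have hTle : ∀ M M' q, T M q ≤ T M' q + 1 / 2 * dist M M' := by
    intro M M' q
    refine Finset.sup'_le _ _ (fun d hd => ?_)
    have h1 : (w q d + M' (δ q d)) / K ≤ T M' q :=
      Finset.le_sup' (fun d => (w q d + M' (δ q d)) / K) hd
    have h2 : M (δ q d) - M' (δ q d) ≤ dist M M' :=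
      (le_abs_self _).trans (by rw [← Real.dist_eq]; exact dist_le_pi_dist M M' _)
    have h3 : (w q d + M (δ q d)) / K - (w q d + M' (δ q d)) / K ≤ 1 / 2 * dist M M' := by
      rw [← sub_div, div_le_iff₀ hK0]
      have hK' : (2:ℝ) ≤ K := by exact_mod_cast hK
      have := dist_nonneg (x := M) (y := M')
      nlinarith
    linarith
  have hc : ContractingWith (1/2 : NNReal) T := by
    refine ⟨?_, ?_⟩
    · rw [← NNReal.coe_lt_coe]; norm_num
    · refine LipschitzWith.of_dist_le_mul (fun M M' => ?_)
      rw [dist_pi_le_iff (by positivity)]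
      intro q
      rw [Real.dist_eq, abs_sub_le_iff]
      have h1 := hTle M M' q
      have h2 := hTle M' M q
      rw [dist_comm] at h2
      push_cast
      constructor <;> linarith
  let M := ContractingWith.fixedPoint T hc
  have hM : T M = M := hc.fixedPoint_isFixedPt
  have hex : ∀ q, ∃ d, d < K ∧ M q = (w q d + M (δ q d)) / K := by
    intro q
    obtain ⟨d, hd, h⟩ := Finset.exists_mem_eq_sup' hne (fun d => (w q d + M (δ q d)) / K)
    refine ⟨d, Finset.mem_range.1 hd, ?_⟩
    rw [← h]
    exact (congrFun hM q).symm
  choose g hg hgM using hex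
  refine ⟨M, g, hg, ?_, ?_⟩
  · intro q d hd
    have h1 : (w q d + M (δ q d)) / K ≤ T M q :=
      Finset.le_sup' (fun d => (w q d + M (δ q d)) / K) (Finset.mem_range.2 hd)
    rw [hM, div_le_iff₀ hK0] at h1
    linarith
  · intro q
    have := hgM q
    rw [eq_div_iff hK0.ne'] at this
    linarith

/-- The supremum of the averages of an invariant weight is rational. -/
lemma sup_rational {Q : Type} [Fintype Q] {K : ℕ} (hK : 2 ≤ K) (δ : Q → ℕ → Q)
    (s : ℕ → Q) (hs : ∀ n d, d < K → s (K * n + d) = δ (s n) d) (a : Q → ℚ)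
    (ha : Bop ℚ K δ a = a) (l : ℝ)
    (hl1 : ∀ N : ℕ, ((∑ n ∈ Finset.range N, a (s n) : ℚ) : ℝ) ≤ l * N)
    (hl2 : ∀ ε : ℝ, 0 < ε → ∃ N : ℕ, 0 < N ∧ (l - ε) * N < ((∑ n ∈ Finset.range N, a (s n) : ℚ) : ℝ)) :
    ∃ q : ℚ, l = (q : ℝ) := by
  set φ : ℕ → ℚ := fun N => ∑ n ∈ Finset.range N, a (s n) with hφ
  have hK0 : (0:ℝ) < K := by positivity
  have hK1 : (1:ℝ) < K := by exact_mod_cast (by omega : 1 < K)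
  have hscale : ∀ N, φ (K * N) = K * φ N := by
    intro N
    have := sum_scale ℚ hK δ s hs a N
    rwa [ha] at this
  set W : Q → ℕ → ℚ := fun q d => ∑ e ∈ Finset.range d, a (δ q e) with hW
  have hstep : ∀ N d, d < K → φ (K * N + d) = K * φ N + W (s N) d := by
    intro N d hd
    rw [← hscale]
    simp only [hφ, hW]
    rw [Finset.sum_range_add]
    congr 1
    exact Finset.sum_congr rfl (fun e he => by rw [hs N e ((Finset.mem_range.1 he).trans hd)])
  obtain ⟨M, g, hg, hM1, hM2⟩ := bellman hK δ (fun q d => (W q d : ℝ) - l * d)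
  set Φ : ℕ → ℝ := fun N => (φ N : ℝ) - l * N + M (s N) with hΦ
  have hΦle : ∀ N d, d < K → Φ (K * N + d) ≤ K * Φ N := by
    intro N d hd
    have := hM1 (s N) d hd
    simp only [hΦ]
    rw [hstep N d hd, hs N d hd]
    push_cast
    linarith
  have hΦeq : ∀ N, Φ (K * N + g (s N)) = K * Φ N := by
    intro N
    have := hM2 (s N)
    simp only [hΦ]
    rw [hstep N _ (hg _), hs N _ (hg _)]
    push_cast
    linarith
  obtain ⟨C, hC0, hC⟩ := exists_bound M
  have hΦC : ∀ N, Φ N ≤ C := by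
    intro N
    have h1 := hl1 N
    have h2 := (le_abs_self _).trans (hC (s N))
    simp only [hΦ]
    linarith
  have hΦ0 : ∀ N, Φ N ≤ 0 := by
    intro N
    by_contra! hpos
    have hit : ∀ m : ℕ, ∃ N', Φ N' = K ^ m * Φ N := by
      intro m
      induction m with
      | zero => exact ⟨N, by simp⟩
      | succ m ih =>
        obtain ⟨N', h⟩ := ih
        exact ⟨_, by rw [hΦeq N', h]; ring⟩
    obtain ⟨m, hm⟩ := pow_unbounded_of_one_lt (C / Φ N) hK1
    rw [div_lt_iff₀ hpos] at hm
    obtain ⟨N', h⟩ := hit m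
    have := hΦC N'
    linarith
  have hex : ∃ N, 0 < N ∧ Φ N = 0 := by
    by_contra! hno
    have hneg : ∀ N, 0 < N → Φ N < 0 := fun N hN => lt_of_le_of_ne (hΦ0 N) (hno N hN)
    obtain ⟨d0, hd0, hmax⟩ := Finset.exists_max_image (Finset.Ico 1 K) Φ ⟨1, by simp; omega⟩
    have hd0' := hneg d0 (by simp at hd0; omega)
    set η := -Φ d0 / K with hη
    have hη0 : 0 < η := by
      apply div_pos _ hK0
      linarith
    have hηK : η * K = -Φ d0 := div_mul_cancel₀ _ hK0.ne'
    have hbound : ∀ N, 0 < N → Φ N ≤ -η * (N + 1) := by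
      intro N
      induction N using Nat.strong_induction_on with
      | _ N ih =>
        intro hN
        by_cases hNK : N < K
        · have h1 := hmax N (by simp; omega)
          have h2 : (N:ℝ) + 1 ≤ K := by exact_mod_cast hNK
          nlinarith
        · push Not at hNK
          have hdm := Nat.div_add_mod N K
          have hr := Nat.mod_lt N (by omega : 0 < K)
          have hlt : N / K < N := Nat.div_lt_self hN (by omega)
          have hp : 0 < N / K := Nat.div_pos hNK (by omega)
          have h1 := ih _ hlt hp
          have h2 := hΦle (N / K) (N % K) hr
          rw [hdm] at h2
          have h3 : (N:ℝ) + 1 ≤ K * ((N / K : ℕ) + 1) := by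
            have : N + 1 ≤ K * (N / K + 1) := by rw [mul_add]; omega
            exact_mod_cast this
          nlinarith
    have hφle : ∀ N, 0 < N → (φ N : ℝ) ≤ (l - η) * N + C := by
      intro N hN
      have h1 := hbound N hN
      have h2 := (neg_le_abs _).trans (hC (s N))
      simp only [hΦ] at h1
      linarith
    obtain ⟨N, hN, hlt⟩ := hl2 (η) hη0
    have hpow : ∀ m : ℕ, φ (K ^ m * N) = K ^ m * φ N := by
      intro m
      induction m with
      | zero => simp
      | succ m ih => rw [pow_succ', mul_assoc, hscale, ih]; ring
    have hgap : 0 < (φ N : ℝ) - (l - η) * N := by linarith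
    obtain ⟨m, hm⟩ := pow_unbounded_of_one_lt (C / ((φ N : ℝ) - (l - η) * N)) hK1
    rw [div_lt_iff₀ hgap] at hm
    have := hφle (K ^ m * N) (by positivity)
    rw [hpow] at this
    push_cast at this
    linarith
  obtain ⟨N, hN, hN0⟩ := hex
  obtain ⟨α, hα⟩ := policy_solve hK (fun q => δ q (g q)) (fun q => W q (g q))
  obtain ⟨β, hβ⟩ := policy_solve hK (fun q => δ q (g q)) (fun q => (g q : ℚ))
  have hβ0 := policy_nonneg hK _ _ β (fun q => by positivity) hβ (s N)
  have hMeq := policy_inj hK (fun q => δ q (g q)) (fun q => M q - ((α q : ℝ) - l * β q)) (by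
    intro q
    have h1 := hM2 q
    have h2 : (K:ℝ) * α q = W q (g q) + α (δ q (g q)) := by exact_mod_cast hα q
    have h3 : (K:ℝ) * β q = g q + β (δ q (g q)) := by exact_mod_cast hβ q
    linear_combination h1 - h2 + l * h3)
  have hMs := congrFun hMeq (s N)
  simp only [Pi.zero_apply] at hMs
  have hpos : (0:ℚ) < N + β (s N) := by
    have : (0:ℚ) < N := by exact_mod_cast hN
    linarith
  refine ⟨(φ N + α (s N)) / (N + β (s N)), ?_⟩
  have hpos' : (0:ℝ) < (N:ℝ) + β (s N) := by exact_mod_cast hpos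
  push_cast
  rw [eq_div_iff hpos'.ne']
  simp only [hΦ] at hN0
  linarith

/-- limsup statement for a complete automaton with idempotent zero transition -/
lemma limsup_rational {Q : Type} [Fintype Q] {K : ℕ} (hK : 2 ≤ K) (δ : Q → ℕ → Q)
    (hδ : ∀ q, δ (δ q 0) 0 = δ q 0)
    (s : ℕ → Q) (hs : ∀ n d, d < K → s (K * n + d) = δ (s n) d) (v : Q → ℚ) :
    ∃ q : ℚ, Filter.atTop.limsup
      (fun N : ℕ => ((∑ n ∈ Finset.range N, v (s n) : ℚ) : ℝ) / N) = (q : ℝ) := by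
  obtain ⟨a, ha, hlim⟩ := exists_limit hK δ hδ v
  set φ : ℕ → ℚ := fun N => ∑ n ∈ Finset.range N, a (s n) with hφ
  have hK1 : 1 < K := by omega
  obtain ⟨C, hC0, hC⟩ := exists_bound (fun q => (a q : ℝ))
  have hφC : ∀ N, |(φ N : ℝ)| ≤ N * C := by
    intro N
    have := abs_sum_le _ C hC s N
    simp only [hφ]
    push_cast
    exact this
  have hdiff : ∀ ε : ℝ, 0 < ε → ∀ᶠ N : ℕ in atTop, 
      |((∑ n ∈ Finset.range N, v (s n) : ℚ) : ℝ) / N - φ N / N| ≤ ε := by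
    intro ε hε
    filter_upwards [small_weighted_sum hK δ s hs _ hlim ε hε, eventually_gt_atTop 0] with N hN hN0
    have hN0' : (0:ℝ) < N := by exact_mod_cast hN0
    rw [← sub_div, abs_div, Nat.abs_cast, div_le_iff₀ hN0']
    rw [Finset.sum_sub_distrib] at hN
    simp only [hφ]
    push_cast
    exact hN
  have hbd : BddAbove (Set.range (fun N : ℕ => (φ (N+1) : ℝ) / ((N+1 : ℕ) : ℝ))) := by
    refine ⟨C, ?_⟩
    rintro _ ⟨N, rfl⟩
    have : (0:ℝ) < ((N+1 : ℕ) : ℝ) := by positivity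
    simp only
    rw [div_le_iff₀ this, mul_comm]
    exact (le_abs_self _).trans (hφC _)
  set l : ℝ := ⨆ N : ℕ, (φ (N+1) : ℝ) / ((N+1 : ℕ) : ℝ) with hl
  have hle : ∀ N : ℕ, 0 < N → (φ N : ℝ) / N ≤ l := by
    intro N hN
    obtain ⟨N', rfl⟩ : ∃ N', N = N' + 1 := ⟨N - 1, by omega⟩
    exact le_ciSup hbd N'
  have hl1 : ∀ N : ℕ, (φ N : ℝ) ≤ l * N := by
    intro N
    rcases Nat.eq_zero_or_pos N with rfl | hN
    · simp [hφ]
    · have := hle N hN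
      rwa [div_le_iff₀ (by exact_mod_cast hN)] at this
  have hl2' : ∀ ε : ℝ, 0 < ε → ∃ N : ℕ, 0 < N ∧ l - ε < (φ N : ℝ) / N := by
    intro ε hε
    obtain ⟨N, hN⟩ := exists_lt_of_lt_ciSup (by linarith : l - ε < l)
    exact ⟨N+1, by omega, hN⟩
  have hl2 : ∀ ε : ℝ, 0 < ε → ∃ N : ℕ, 0 < N ∧ (l - ε) * N < (φ N : ℝ) := by
    intro ε hε
    obtain ⟨N, hN, h⟩ := hl2' ε hε
    refine ⟨N, hN, ?_⟩
    rwa [lt_div_iff₀ (by exact_mod_cast hN)] at h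
  obtain ⟨q, hq⟩ := sup_rational hK δ s hs a ha l hl1 hl2
  refine ⟨q, ?_⟩
  rw [← hq]
  have hscale : ∀ N, φ (K * N) = K * φ N := by
    intro N
    have := sum_scale ℚ hK δ s hs a N
    rwa [ha] at this
  have hpow : ∀ N m : ℕ, φ (K ^ m * N) = K ^ m * φ N := by
    intro N m
    induction m with
    | zero => simp
    | succ m ih => rw [pow_succ', mul_assoc, hscale, ih]; ring
  have hup : ∀ ε : ℝ, 0 < ε → ∀ᶠ N : ℕ in atTop,
      ((∑ n ∈ Finset.range N, v (s n) : ℚ) : ℝ) / N ≤ l + ε := by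
    intro ε hε
    filter_upwards [hdiff ε hε, eventually_gt_atTop 0] with N h1 h2
    have := hle N h2
    have := (abs_le.1 h1).2
    linarith
  have hlow : ∀ ε : ℝ, 0 < ε → ∃ᶠ N : ℕ in atTop,
      l - ε ≤ ((∑ n ∈ Finset.range N, v (s n) : ℚ) : ℝ) / N := by
    intro ε hε
    obtain ⟨N, hN, h⟩ := hl2' (ε / 2) (by positivity)
    have hfreq : ∃ᶠ N : ℕ in atTop, l - ε / 2 ≤ (φ N : ℝ) / N := by
      rw [frequently_atTop]
      intro m
      refine ⟨K ^ m * N, ?_, ?_⟩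
      · have h1 : m < K ^ m := Nat.lt_pow_self hK1
        have h2 : K ^ m * 1 ≤ K ^ m * N := Nat.mul_le_mul_left _ hN
        omega
      · rw [hpow]
        push_cast
        rw [mul_div_mul_left _ _ (by positivity)]
        exact h.le
    refine (hfreq.and_eventually (hdiff (ε / 2) (by positivity))).mono ?_
    rintro N ⟨h1, h2⟩
    have := (abs_le.1 h2).1
    linarith
  have hbelow : ∀ᶠ N : ℕ in atTop, -C - 1 ≤ ((∑ n ∈ Finset.range N, v (s n) : ℚ) : ℝ) / N := by
    filter_upwards [hdiff 1 one_pos, eventually_gt_atTop 0] with N h1 h2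
    have h3 : -C ≤ (φ N : ℝ) / N := by
      rw [le_div_iff₀ (by exact_mod_cast h2)]
      have := (abs_le.1 (hφC N)).1
      linarith
    have := (abs_le.1 h1).1
    linarith
  have hcob : IsCoboundedUnder (· ≤ ·) atTop
      (fun N : ℕ => ((∑ n ∈ Finset.range N, v (s n) : ℚ) : ℝ) / N) :=
    IsBoundedUnder.isCoboundedUnder_le ⟨-C - 1, by simpa using hbelow⟩
  have hbdd : IsBoundedUnder (· ≤ ·) atTop
      (fun N : ℕ => ((∑ n ∈ Finset.range N, v (s n) : ℚ) : ℝ) / N) :=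
    ⟨l + 1, by simpa using hup 1 one_pos⟩
  apply le_antisymm
  · exact le_of_forall_pos_le_add (fun ε hε => limsup_le_of_le hcob (hup ε hε))
  · refine le_of_forall_pos_le_add (fun ε hε => ?_)
    have := le_limsup_of_frequently_le (hlow ε hε) hbdd
    linarith

/-- transition reading a block of `p` digits -/
def blockStep {Q : Type} (k : ℕ) (δ : Q → ℕ → Q) : ℕ → Q → ℕ → Q
  | 0, q, _ => q
  | p + 1, q, D => δ (blockStep k δ p q (D / k)) (D % k)

lemma blockStep_spec {Q : Type} {k : ℕ} (hk : 2 ≤ k) (δ : Q → ℕ → Q) (s : ℕ → Q)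
    (hs : ∀ n d, d < k → s (k * n + d) = δ (s n) d) (p : ℕ) :
    ∀ n D, D < k ^ p → s (k ^ p * n + D) = blockStep k δ p (s n) D := by
  induction p with
  | zero => intro n D hD; simp at hD; simp [hD, blockStep]
  | succ p ih =>
    intro n D hD
    have h1 : D / k < k ^ p := by
      rw [Nat.div_lt_iff_lt_mul (by omega), ← pow_succ]; exact hD
    have h2 := Nat.mod_lt D (by omega : 0 < k)
    have h3 : k ^ (p+1) * n + D = k * (k ^ p * n + D / k) + D % k := by
      conv_lhs => rw [← Nat.div_add_mod D k]
      ring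
    rw [h3, hs _ _ h2, ih _ _ h1, blockStep]

lemma blockStep_zero {Q : Type} (k : ℕ) (δ : Q → ℕ → Q) (p : ℕ) (q : Q) :
    blockStep k δ p q 0 = (fun q => δ q 0)^[p] q := by
  induction p with
  | zero => rfl
  | succ p ih => rw [blockStep, Function.iterate_succ_apply', Nat.zero_div, Nat.zero_mod, ih]

lemma exists_idem_iterate {Q : Type} [Fintype Q] (f : Q → Q) :
    ∃ p, 0 < p ∧ ∀ q, f^[p] (f^[p] q) = f^[p] q := by
  obtain ⟨i, j, hij, h⟩ : ∃ i j : ℕ, i < j ∧ f^[i] = f^[j] := by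
    obtain ⟨i, j, hne, h⟩ := Finite.exists_ne_map_eq_of_infinite (fun n : ℕ => f^[n])
    rcases lt_or_gt_of_ne hne with h1 | h1
    · exact ⟨i, j, h1, h⟩
    · exact ⟨j, i, h1, h.symm⟩
  obtain ⟨b, rfl⟩ : ∃ b, j = i + b := ⟨j - i, by omega⟩
  have h1 : ∀ c, f^[c + i] = f^[c + i + b] := by
    intro c
    rw [add_assoc, Function.iterate_add, h, ← Function.iterate_add]
  have h2 : ∀ t c, f^[c + i] = f^[c + i + t * b] := by
    intro t
    induction t with
    | zero => simp
    | succ t ih =>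
      intro c
      rw [ih c]
      have := h1 (c + t * b)
      rw [show c + t * b + i = c + i + t * b by ring] at this
      rw [this]
      congr 1
      ring
  have hb : 0 < b := by omega
  refine ⟨(i + 1) * b, by positivity, fun q => ?_⟩
  rw [← Function.iterate_add_apply]
  have hge : i ≤ (i + 1) * b := by nlinarith
  have := h2 (i + 1) ((i + 1) * b - i)
  rw [Nat.sub_add_cancel hge] at this
  rw [← this]

theorem upper_density_automatic_set_rational
    (k : ℕ) (hk : 2 ≤ k) (S : Set ℕ) (hS : IsAutomaticSet k S) :
    ∃ q : ℚ, Filter.atTop.limsup (fun N : ℕ => (piCount S N : ℝ) / N) = (q : ℝ) := by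
  classical
  obtain ⟨Q, hQ, q₀, δ, τ, hτ⟩ := hS
  let r : ℕ → Q := fun n => ((Nat.digits k n).reverse).foldl δ q₀
  have hr : ∀ n d, d < k → (n ≠ 0 ∨ d ≠ 0) → r (k * n + d) = δ (r n) d := by
    intro n d hd hnd
    simp only [r]
    rw [add_comm, Nat.digits_add k (by omega) d n hd hnd.symm]
    simp
  let s : ℕ → Option Q := fun n => if n = 0 then none else some (r n)
  let δ' : Option Q → ℕ → Option Q := fun o d => match o with
    | none => s d
    | some q => some (δ q d)
  have hs : ∀ n d, d < k → s (k * n + d) = δ' (s n) d := by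
    intro n d hd
    by_cases hn : n = 0
    · subst hn
      simp [s, δ']
    · have h1 : k * n + d ≠ 0 := by
        have : 0 < k * n := Nat.mul_pos (by omega) (by omega)
        omega
      simp only [s, hn, h1, if_false, δ']
      rw [hr n d hd (Or.inl hn)]
  let v : Option Q → ℚ := fun o => match o with
    | none => (τ q₀ : ℚ)
    | some q => (τ q : ℚ)
  have hv : ∀ n, v (s n) = ((S.indicator (fun _ => (1:ℕ)) n : ℕ) : ℚ) := by
    intro n
    rw [hτ n]
    by_cases hn : n = 0
    · subst hn; simp [v, s]
    · simp [v, s, hn, r]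
  obtain ⟨p, hp, hidem⟩ := exists_idem_iterate (fun q => δ' q 0)
  have hK : 2 ≤ k ^ p := hk.trans (Nat.le_self_pow hp.ne' k)
  obtain ⟨q, hq⟩ := limsup_rational hK (blockStep k δ' p)
    (fun q => by simp only [blockStep_zero]; exact hidem q) s
    (blockStep_spec hk δ' s hs p) v
  refine ⟨q, ?_⟩
  rw [← hq]
  congr 1
  funext N
  congr 1
  have hcount : piCount S N = ∑ n ∈ Finset.range N, S.indicator (fun _ => (1:ℕ)) n := by
    have h1 : S ∩ Set.Iio N = ((Finset.range N).filter (· ∈ S) : Finset ℕ) := by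
      ext n; simp [and_comm]
    rw [piCount, h1, Set.ncard_coe_finset, Finset.card_filter]
    exact Finset.sum_congr rfl (fun n _ => by simp [Set.indicator_apply])
  rw [hcount]
  simp only [hv]
  push_cast
  rfl
end

section
/- Let k ≥ 2 be a natural number and let S ⊆ ℕ be a k-automatic set whose lower density is α and whose upper density is β. Then either (α, β) ∈ {(0,0), (1,1)}, or α and β are rational numbers with 0 < α ≤ β < 1. -/
open Filter

/-- Averaging operator of an automaton. -/
def avgOp (𝕜 : Type) [Field 𝕜] {Q : Type} (k : ℕ) (δ : Q → ℕ → Q) :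
    (Q → 𝕜) →ₗ[𝕜] (Q → 𝕜) where
  toFun x := fun q => (k : 𝕜)⁻¹ * ∑ b ∈ Finset.range k, x (δ q b)
  map_add' x y := by
    funext q
    simp [Finset.sum_add_distrib, mul_add]
  map_smul' c x := by
    funext q
    simp only [Pi.smul_apply, smul_eq_mul, RingHom.id_apply, ← Finset.mul_sum]
    ring

theorem avgOp_apply (𝕜 : Type) [Field 𝕜] {Q : Type} (k : ℕ) (δ : Q → ℕ → Q) (x : Q → 𝕜) (q : Q) :
    avgOp 𝕜 k δ x q = (k : 𝕜)⁻¹ * ∑ b ∈ Finset.range k, x (δ q b) := rfl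

theorem avgOp_le {Q : Type} {k : ℕ} (hk : 2 ≤ k) (δ : Q → ℕ → Q) (x : Q → ℝ) (q : Q) (c : ℝ)
    (h : ∀ b < k, x (δ q b) ≤ c) : avgOp ℝ k δ x q ≤ c := by
  have hk0 : (0 : ℝ) < k := by positivity
  rw [avgOp_apply, inv_mul_le_iff₀ hk0]
  calc ∑ b ∈ Finset.range k, x (δ q b) ≤ ∑ b ∈ Finset.range k, c :=
        Finset.sum_le_sum fun b hb => h b (Finset.mem_range.1 hb)
    _ = k * c := by simp

theorem le_avgOp {Q : Type} {k : ℕ} (hk : 2 ≤ k) (δ : Q → ℕ → Q) (x : Q → ℝ) (q : Q) (c : ℝ)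
    (h : ∀ b < k, c ≤ x (δ q b)) : c ≤ avgOp ℝ k δ x q := by
  have := avgOp_le hk δ (-x) q (-c) (fun b hb => by simpa using h b hb)
  rw [map_neg] at this
  simpa using this

theorem avgOp_le' {Q : Type} {k : ℕ} (hk : 2 ≤ k) (δ : Q → ℕ → Q) (x : Q → ℝ) (q : Q) (c t : ℝ)
    (h : ∀ b < k, x (δ q b) ≤ c) (b₀ : ℕ) (hb₀ : b₀ < k) (ht : x (δ q b₀) ≤ t) :
    avgOp ℝ k δ x q ≤ c + (t - c) / k := by
  have hk0 : (0 : ℝ) < k := by positivity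
  rw [avgOp_apply, inv_mul_le_iff₀ hk0, ← Finset.add_sum_erase _ _ (Finset.mem_range.2 hb₀)]
  have h2 : ∑ b ∈ (Finset.range k).erase b₀, x (δ q b) ≤ (k - 1) * c := by
    calc ∑ b ∈ (Finset.range k).erase b₀, x (δ q b) ≤ ∑ b ∈ (Finset.range k).erase b₀, c :=
          Finset.sum_le_sum fun b hb => h b (Finset.mem_range.1 (Finset.mem_of_mem_erase hb))
      _ = (k - 1) * c := by
          rw [Finset.sum_const, Finset.card_erase_of_mem (Finset.mem_range.2 hb₀), Finset.card_range,
            nsmul_eq_mul, Nat.cast_sub (by omega)]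
          simp
  have : (k : ℝ) * (c + (t - c) / k) = k * c + (t - c) := by field_simp
  rw [this]
  linarith

theorem le_avgOp' {Q : Type} {k : ℕ} (hk : 2 ≤ k) (δ : Q → ℕ → Q) (x : Q → ℝ) (q : Q) (c t : ℝ)
    (h : ∀ b < k, c ≤ x (δ q b)) (b₀ : ℕ) (hb₀ : b₀ < k) (ht : t ≤ x (δ q b₀)) :
    c + (t - c) / k ≤ avgOp ℝ k δ x q := by
  have := avgOp_le' hk δ (-x) q (-c) (-t) (fun b hb => by simpa using h b hb) b₀ hb₀ (by simpa using ht)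
  rw [map_neg] at this
  simp only [Pi.neg_apply] at this
  have e : -c + (-t - -c) / (k : ℝ) = -(c + (t - c) / k) := by ring
  rw [e] at this
  linarith

/-- From every state one can reach a complete recurrent class in one step. -/
theorem exists_recurrent {Q : Type} {k : ℕ} (hk : 2 ≤ k) (δ : Q → ℕ → Q)
    (htr : ∀ q, ∀ b₁ < k, ∀ b₂ < k, ∃ b₃ < k, δ (δ q b₁) b₂ = δ q b₃) (q : Q) :
    ∃ b < k, ∃ C : Set Q, δ q b ∈ C ∧ (∀ q' ∈ C, ∀ c < k, δ q' c ∈ C) ∧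
      (∀ q' ∈ C, ∃ c < k, δ q' c = δ q b) := by
  classical
  let R : Q → Finset Q := fun q => (Finset.range k).image (δ q)
  have hR : ∀ q q', q' ∈ R q ↔ ∃ b < k, δ q b = q' := by
    intro q q'; simp [R]
  have htR : ∀ q, ∀ q' ∈ R q, R q' ⊆ R q := by
    intro q q' h q'' h'
    obtain ⟨b, hb, rfl⟩ := (hR _ _).1 h
    obtain ⟨c, hc, rfl⟩ := (hR _ _).1 h'
    obtain ⟨d, hd, e⟩ := htr q b hb c hc
    rw [e]
    exact (hR _ _).2 ⟨d, hd, rfl⟩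
  have hne : ∀ q, (R q).Nonempty := fun q => ⟨δ q 0, (hR _ _).2 ⟨0, by omega, rfl⟩⟩
  obtain ⟨q₁, h₁, hmin⟩ := Finset.exists_min_image (R q) (fun q' => (R q').card) (hne q)
  have heq : ∀ q₂ ∈ R q₁, R q₂ = R q₁ := by
    intro q₂ h₂
    exact Finset.eq_of_subset_of_card_le (htR _ _ h₂) (hmin q₂ (htR _ _ h₁ h₂))
  obtain ⟨q₂, h₂⟩ := hne q₁
  obtain ⟨b, hb, e⟩ := (hR _ _).1 (htR _ _ h₁ h₂)
  refine ⟨b, hb, (R q₁ : Set Q), ?_, ?_, ?_⟩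
  · rw [e]; exact h₂
  · intro q' hq' c hc
    have := heq q' hq'
    show _ ∈ R q₁
    rw [← this]
    exact (hR _ _).2 ⟨c, hc, rfl⟩
  · intro q' hq'
    rw [e, ← hR, heq q' hq']
    exact h₂

theorem recurrent_bound {Q : Type} {k : ℕ} (hk : 2 ≤ k) (δ : Q → ℕ → Q)
    (C : Set Q) (q₀ : Q) (hC : ∀ q' ∈ C, ∀ c < k, δ q' c ∈ C)
    (hC' : ∀ q' ∈ C, ∃ c < k, δ q' c = q₀) (x : Q → ℝ) (B : ℝ) (hB : ∀ q, |x q| ≤ B) (m : ℕ) :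
    ∃ a b : ℝ, b - a ≤ 2 * B * (1 - (k : ℝ)⁻¹) ^ m ∧
      ∀ q ∈ C, a ≤ ((avgOp ℝ k δ)^[m] x) q ∧ ((avgOp ℝ k δ)^[m] x) q ≤ b := by
  induction m with
  | zero =>
    refine ⟨-B, B, by simp; linarith, fun q _ => abs_le.1 (hB q)⟩
  | succ m ih =>
    obtain ⟨a, b, hab, h⟩ := ih
    set y := (avgOp ℝ k δ)^[m] x with hy
    refine ⟨a + (y q₀ - a) / k, b + (y q₀ - b) / k, ?_, ?_⟩
    · have hr : (0:ℝ) ≤ 1 - (k:ℝ)⁻¹ := by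
        have : (k:ℝ)⁻¹ ≤ 1 := inv_le_one_of_one_le₀ (by exact_mod_cast (by omega : 1 ≤ k))
        linarith
      calc b + (y q₀ - b) / k - (a + (y q₀ - a) / k) = (b - a) * (1 - (k:ℝ)⁻¹) := by
            rw [div_eq_mul_inv, div_eq_mul_inv]; ring
        _ ≤ 2 * B * (1 - (k : ℝ)⁻¹) ^ m * (1 - (k:ℝ)⁻¹) := mul_le_mul_of_nonneg_right hab hr
        _ = _ := by ring
    · intro q hq
      obtain ⟨c, hc, e⟩ := hC' q hq
      rw [Function.iterate_succ_apply', ← hy]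
      exact ⟨le_avgOp' hk δ y q a _ (fun b hb => (h _ (hC q hq b hb)).1) c hc (by rw [e]),
        avgOp_le' hk δ y q b _ (fun b hb => (h _ (hC q hq b hb)).2) c hc (by rw [e])⟩

theorem avgOp_diff_bound {Q : Type} {k : ℕ} (hk : 2 ≤ k) (δ : Q → ℕ → Q)
    (htr : ∀ q, ∀ b₁ < k, ∀ b₂ < k, ∃ b₃ < k, δ (δ q b₁) b₂ = δ q b₃)
    (x : Q → ℝ) (B : ℝ) (hB : ∀ q, |x q| ≤ B) (m : ℕ) (q : Q) :
    |((avgOp ℝ k δ)^[m] (avgOp ℝ k δ x - x)) q| ≤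
      (2 * B + 2 * B * m) * (1 - (k : ℝ)⁻¹) ^ m := by
  have hk1 : (1:ℝ) ≤ k := by exact_mod_cast (by omega : 1 ≤ k)
  have hk2 : (2:ℝ) ≤ k := by exact_mod_cast hk
  have hk0 : (0:ℝ) < k := by linarith
  have hB0 : 0 ≤ B := (abs_nonneg _).trans (hB q)
  have hr : (2:ℝ)⁻¹ ≤ 1 - (k:ℝ)⁻¹ := by
    have : (k:ℝ)⁻¹ ≤ 2⁻¹ := inv_anti₀ (by norm_num) hk2
    linarith
  induction m generalizing q with
  | zero =>
    have h1 : |avgOp ℝ k δ x q| ≤ B := abs_le.2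
      ⟨le_avgOp hk δ x q _ fun b _ => (abs_le.1 (hB _)).1,
       avgOp_le hk δ x q _ fun b _ => (abs_le.1 (hB _)).2⟩
    have := abs_sub (avgOp ℝ k δ x q) (x q)
    have := hB q
    simp only [Function.iterate_zero, id, Pi.sub_apply]
    norm_num
    linarith
  | succ m ih =>
    set y := (avgOp ℝ k δ)^[m] (avgOp ℝ k δ x - x) with hy
    obtain ⟨b, hb, C, h0, hC, hC'⟩ := exists_recurrent hk δ htr q
    obtain ⟨u, v, huv, huv'⟩ := recurrent_bound hk δ C _ hC hC' x B hB m
    have hyq : |y (δ q b)| ≤ 2 * B * (1 - (k : ℝ)⁻¹) ^ m := by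
      have e : y = avgOp ℝ k δ ((avgOp ℝ k δ)^[m] x) - (avgOp ℝ k δ)^[m] x := by
        rw [hy, ← Module.End.coe_pow, map_sub, ← Module.End.mul_apply, ← Module.End.mul_apply, ← pow_succ,
          ← pow_succ']
      have h1 := huv' _ h0
      have h2 := le_avgOp hk δ ((avgOp ℝ k δ)^[m] x) _ u fun c hc => (huv' _ (hC _ h0 c hc)).1
      have h3 := avgOp_le hk δ ((avgOp ℝ k δ)^[m] x) _ v fun c hc => (huv' _ (hC _ h0 c hc)).2
      rw [e, Pi.sub_apply, abs_le]
      constructor <;> linarith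
    set r := 1 - (k:ℝ)⁻¹ with hrdef
    set K := (2 * B + 2 * B * m) * r ^ m with hK
    set t := 2 * B * r ^ m with ht
    have h1 := avgOp_le' hk δ y q K t (fun c _ => (abs_le.1 (ih _)).2) b hb (abs_le.1 hyq).2
    have h2 := le_avgOp' hk δ y q (-K) (-t) (fun c _ => (abs_le.1 (ih _)).1) b hb (abs_le.1 hyq).1
    have h3 : K + (t - K) / k ≤ (2 * B + 2 * B * (m + 1 : ℕ)) * r ^ (m + 1) := by
      have : K + (t - K) / k = K * r + t * (k:ℝ)⁻¹ := by rw [hrdef]; rw [div_eq_mul_inv]; ring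
      rw [this]
      have h4 : t * (k:ℝ)⁻¹ ≤ t * r := by
        apply mul_le_mul_of_nonneg_left _ (by positivity)
        have : (k:ℝ)⁻¹ ≤ 2⁻¹ := inv_anti₀ (by norm_num) hk2
        linarith
      have h5 : (2 * B + 2 * B * (m + 1 : ℕ)) * r ^ (m + 1) = K * r + t * r := by
        rw [hK, ht]; push_cast; ring
      linarith
    have h6 : -K + (-t - -K) / k = -(K + (t - K) / k) := by ring
    rw [Function.iterate_succ_apply', ← hy, abs_le]
    constructor <;> linarith

theorem avgOp_diff_tendsto {Q : Type} [Finite Q] {k : ℕ} (hk : 2 ≤ k) (δ : Q → ℕ → Q)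
    (htr : ∀ q, ∀ b₁ < k, ∀ b₂ < k, ∃ b₃ < k, δ (δ q b₁) b₂ = δ q b₃)
    (x : Q → ℝ) (q : Q) :
    Tendsto (fun m => ((avgOp ℝ k δ)^[m] (avgOp ℝ k δ x - x)) q) atTop (nhds 0) := by
  have : Nonempty Q := ⟨q⟩
  obtain ⟨q₁, h₁⟩ := Finite.exists_max fun q => |x q|
  have hk2 : (2:ℝ) ≤ k := by exact_mod_cast hk
  have h0 : (0:ℝ) < (k:ℝ)⁻¹ := by positivity
  have h1 : (k:ℝ)⁻¹ ≤ 2⁻¹ := inv_anti₀ (by norm_num) hk2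
  refine squeeze_zero_norm (fun m => avgOp_diff_bound hk δ htr x _ h₁ m q) ?_
  have t1 := tendsto_self_mul_const_pow_of_lt_one (r := 1 - (k:ℝ)⁻¹) (by linarith) (by linarith)
  have t2 := tendsto_pow_atTop_nhds_zero_of_lt_one (r := 1 - (k:ℝ)⁻¹) (by linarith) (by linarith)
  have := (t2.const_mul (2 * |x q₁|)).add (t1.const_mul (2 * |x q₁|))
  simp only [mul_zero, add_zero] at this
  refine this.congr fun m => by ring

theorem avgOp_cast {Q : Type} (k : ℕ) (δ : Q → ℕ → Q) (x : Q → ℚ) (m : ℕ) (q : Q) :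
    (((avgOp ℚ k δ)^[m] x q : ℚ) : ℝ) = (avgOp ℝ k δ)^[m] (fun q => (x q : ℝ)) q := by
  induction m generalizing q with
  | zero => simp
  | succ m ih =>
    rw [Function.iterate_succ_apply', Function.iterate_succ_apply', avgOp_apply, avgOp_apply]
    push_cast
    simp only [ih]

/-- Rational limits of the iterated averages. -/
theorem avgOp_limit {Q : Type} [Finite Q] {k : ℕ} (hk : 2 ≤ k) (δ : Q → ℕ → Q)
    (htr : ∀ q, ∀ b₁ < k, ∀ b₂ < k, ∃ b₃ < k, δ (δ q b₁) b₂ = δ q b₃)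
    (x : Q → ℚ) : ∃ ρ : Q → ℚ, avgOp ℚ k δ ρ = ρ ∧
      ∀ q, Tendsto (fun m => (avgOp ℝ k δ)^[m] (fun q => (x q : ℝ)) q) atTop (nhds (ρ q : ℝ)) := by
  have key : ∀ (v : Q → ℚ) q, Tendsto (fun m => (((avgOp ℚ k δ)^[m] (avgOp ℚ k δ v - v) q : ℚ) : ℝ))
      atTop (nhds 0) := by
    intro v q
    refine (avgOp_diff_tendsto hk δ htr (fun q => (v q : ℝ)) q).congr fun m => ?_
    rw [avgOp_cast]
    refine congrFun (congrArg _ ?_) q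
    funext q'
    have := avgOp_cast k δ v 1 q'
    simp only [Function.iterate_one] at this
    simp [this]
  set A : (Q → ℚ) →ₗ[ℚ] (Q → ℚ) := avgOp ℚ k δ - LinearMap.id with hA
  have hAv : ∀ v, A v = avgOp ℚ k δ v - v := fun v => by simp [hA]
  have hdis : Disjoint (LinearMap.ker A) (LinearMap.range A) := by
    rw [Submodule.disjoint_def]
    rintro u hu ⟨v, rfl⟩
    have hfix : avgOp ℚ k δ (A v) = A v := by
      have : A (A v) = 0 := hu
      rw [hAv (A v)] at this
      exact sub_eq_zero.1 this
    funext q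
    have h := key v q
    rw [← hAv] at h
    simp only [Function.iterate_fixed hfix] at h
    have := tendsto_nhds_unique tendsto_const_nhds h
    exact_mod_cast this
  have htop := Submodule.eq_top_of_disjoint _ _
    (by rw [add_comm, LinearMap.finrank_range_add_finrank_ker]) hdis
  have hx : x ∈ LinearMap.ker A ⊔ LinearMap.range A := by rw [htop]; trivial
  obtain ⟨u, hu, w, ⟨v, rfl⟩, rfl⟩ := Submodule.mem_sup.1 hx
  have hfix : avgOp ℚ k δ u = u := by
    have : A u = 0 := hu
    rw [hAv u] at this
    exact sub_eq_zero.1 this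
  refine ⟨u, hfix, fun q => ?_⟩
  have h := (key v q).const_add (u q : ℝ)
  rw [add_zero] at h
  refine h.congr fun m => ?_
  rw [← avgOp_cast, ← hAv, ← Module.End.coe_pow, map_add, Module.End.coe_pow, Function.iterate_fixed hfix]
  simp

theorem piCount_succ (S : Set ℕ) (n : ℕ) [Decidable (n ∈ S)] :
    piCount S (n + 1) = piCount S n + if n ∈ S then 1 else 0 := by
  unfold piCount
  have hfin : (S ∩ Set.Iio n).Finite := (Set.finite_Iio n).subset Set.inter_subset_right
  split_ifs with h
  · have : S ∩ Set.Iio (n + 1) = insert n (S ∩ Set.Iio n) := by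
      ext j
      simp only [Set.mem_inter_iff, Set.mem_Iio, Set.mem_insert_iff]
      constructor
      · rintro ⟨h1, h2⟩
        rcases Nat.lt_succ_iff_lt_or_eq.1 h2 with h3 | h3
        · exact Or.inr ⟨h1, h3⟩
        · exact Or.inl h3
      · rintro (h1 | ⟨h1, h2⟩)
        · subst h1; exact ⟨h, by omega⟩
        · exact ⟨h1, by omega⟩
    rw [this, Set.ncard_insert_of_notMem (by simp) hfin]
  · have : S ∩ Set.Iio (n + 1) = S ∩ Set.Iio n := by
      ext j
      simp only [Set.mem_inter_iff, Set.mem_Iio]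
      constructor
      · rintro ⟨h1, h2⟩
        refine ⟨h1, lt_of_le_of_ne (by omega) ?_⟩
        rintro rfl
        exact h h1
      · rintro ⟨h1, h2⟩
        exact ⟨h1, by omega⟩
    rw [this, add_zero]

theorem piCount_zero (S : Set ℕ) : piCount S 0 = 0 := by
  simp [piCount]

theorem slow_growth (f : ℕ → ℝ) (hf : ∀ n, 0 ≤ f (n + 1) - f n ∧ f (n + 1) - f n ≤ 1) (a r : ℕ) :
    0 ≤ f (a + r) - f a ∧ f (a + r) - f a ≤ r := by
  induction r with
  | zero => simp
  | succ r ih =>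
    have := hf (a + r)
    rw [← add_assoc]
    push_cast
    constructor <;> linarith

theorem phi_scale {Q : Type} (k : ℕ) (s : ℕ → Q) (ρ : Q → ℚ)
    (hρ : ∀ n, ∑ b ∈ Finset.range k, ρ (s (k * n + b)) = k * ρ (s n)) (m n : ℕ) :
    ∑ j ∈ Finset.range (k ^ m * n), (ρ (s j) : ℝ) = (k : ℝ) ^ m * ∑ j ∈ Finset.range n, (ρ (s j) : ℝ) := by
  have h1 : ∀ n, ∑ j ∈ Finset.range (k * n), (ρ (s j) : ℝ) = (k : ℝ) * ∑ j ∈ Finset.range n, (ρ (s j) : ℝ) := by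
    intro n
    induction n with
    | zero => simp
    | succ n ih =>
      rw [mul_add, mul_one, Finset.sum_range_add, ih, Finset.sum_range_succ, mul_add]
      congr 1
      exact_mod_cast hρ n
  induction m with
  | zero => simp
  | succ m ih => rw [pow_succ', mul_assoc, h1, ih]; ring

theorem exists_phi {Q : Type} [Finite Q] {k : ℕ} (hk : 2 ≤ k) (s : ℕ → Q)
    (hs : Function.Surjective s)
    (hcong : ∀ n n' b, b < k → s n = s n' → s (k * n + b) = s (k * n' + b))
    (htr : ∀ n, ∀ b₁ < k, ∀ b₂ < k, ∃ b₃ < k, s (k * (k * n + b₁) + b₂) = s (k * n + b₃))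
    (S : Set ℕ) (A : Set Q) (hA : ∀ n, n ∈ S ↔ s n ∈ A) :
    ∃ ρ : Q → ℚ, (∀ q, 0 ≤ ρ q ∧ ρ q ≤ 1) ∧
      (∀ n, ∑ b ∈ Finset.range k, ρ (s (k * n + b)) = k * ρ (s n)) ∧
      ∀ ε : ℝ, 0 < ε → ∀ᶠ N : ℕ in atTop,
        |(piCount S N : ℝ) - ∑ j ∈ Finset.range N, (ρ (s j) : ℝ)| ≤ ε * N := by
  classical
  have hk0 : (0:ℝ) < k := by positivity
  let δ : Q → ℕ → Q := fun q b => s (k * Function.surjInv hs q + b)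
  have hδ : ∀ n b, b < k → δ (s n) b = s (k * n + b) := by
    intro n b hb
    exact hcong _ _ b hb (Function.surjInv_eq hs _)
  have htr' : ∀ q, ∀ b₁ < k, ∀ b₂ < k, ∃ b₃ < k, δ (δ q b₁) b₂ = δ q b₃ := by
    intro q b₁ h₁ b₂ h₂
    obtain ⟨n, rfl⟩ := hs q
    obtain ⟨b₃, h₃, e⟩ := htr n b₁ h₁ b₂ h₂
    refine ⟨b₃, h₃, ?_⟩
    rw [hδ n b₁ h₁, hδ _ b₂ h₂, hδ n b₃ h₃, e]
  let x : Q → ℚ := fun q => if q ∈ A then 1 else 0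
  obtain ⟨ρ, hfix, hlim⟩ := avgOp_limit hk δ htr' x
  set X : ℕ → Q → ℝ := fun m => (avgOp ℝ k δ)^[m] (fun q => (x q : ℝ)) with hX
  have hXsucc : ∀ m n, X (m + 1) (s n) = (k:ℝ)⁻¹ * ∑ b ∈ Finset.range k, X m (s (k * n + b)) := by
    intro m n
    simp only [hX]
    rw [Function.iterate_succ_apply', avgOp_apply]
    congr 1
    exact Finset.sum_congr rfl fun b hb => by rw [hδ n b (Finset.mem_range.1 hb)]
  have hX01 : ∀ m q, 0 ≤ X m q ∧ X m q ≤ 1 := by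
    intro m
    induction m with
    | zero =>
      intro q
      simp only [hX, Function.iterate_zero, id, x]
      split_ifs <;> simp
    | succ m ih =>
      intro q
      simp only [hX]
      rw [Function.iterate_succ_apply']
      exact ⟨le_avgOp hk δ _ q 0 fun b _ => (ih _).1, avgOp_le hk δ _ q 1 fun b _ => (ih _).2⟩
  have hρ01 : ∀ q, 0 ≤ ρ q ∧ ρ q ≤ 1 := by
    intro q
    have h1 := ge_of_tendsto' (hlim q) fun m => (hX01 m q).1
    have h2 := le_of_tendsto' (hlim q) fun m => (hX01 m q).2
    exact ⟨by exact_mod_cast h1, by exact_mod_cast h2⟩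
  have hρk : ∀ n, ∑ b ∈ Finset.range k, ρ (s (k * n + b)) = k * ρ (s n) := by
    intro n
    have h := congrFun hfix (s n)
    have hkq : (k:ℚ) ≠ 0 := by positivity
    rw [avgOp_apply, inv_mul_eq_iff_eq_mul₀ hkq] at h
    rw [← h]
    exact Finset.sum_congr rfl fun b hb => by rw [hδ n b (Finset.mem_range.1 hb)]
  refine ⟨ρ, hρ01, hρk, ?_⟩
  have hstep : ∀ n, (piCount S (n + 1) : ℝ) - piCount S n = X 0 (s n) := by
    intro n
    rw [piCount_succ]
    simp only [hX, Function.iterate_zero, id, x, hA]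
    split_ifs <;> simp
  have hblock : ∀ m n, (piCount S (k ^ m * (n + 1)) : ℝ) - piCount S (k ^ m * n) = k ^ m * X m (s n) := by
    intro m
    induction m with
    | zero => intro n; simpa using hstep n
    | succ m ih =>
      intro n
      rw [hXsucc]
      have h := Finset.sum_range_sub (fun b => (piCount S (k ^ m * (k * n + b)) : ℝ)) k
      simp only [← add_assoc, ih, ← Finset.mul_sum] at h
      have e1 : k ^ (m + 1) * (n + 1) = k ^ m * (k * n + k) := by ring
      have e2 : k ^ (m + 1) * n = k ^ m * (k * n + 0) := by ring
      rw [e1, e2, ← h]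
      field_simp
      ring
  have hpi : ∀ m n, (piCount S (k ^ m * n) : ℝ) = k ^ m * ∑ j ∈ Finset.range n, X m (s j) := by
    intro m n
    have h := Finset.sum_range_sub (fun b => (piCount S (k ^ m * b) : ℝ)) n
    simp only [hblock, ← Finset.mul_sum] at h
    rw [h]
    simp [piCount_zero]
  set Φ : ℕ → ℝ := fun N => ∑ j ∈ Finset.range N, (ρ (s j) : ℝ) with hΦ
  have hΦslow : ∀ n, 0 ≤ Φ (n + 1) - Φ n ∧ Φ (n + 1) - Φ n ≤ 1 := by
    intro n
    simp only [hΦ, Finset.sum_range_succ, add_sub_cancel_left]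
    have := hρ01 (s n)
    exact ⟨by exact_mod_cast this.1, by exact_mod_cast this.2⟩
  have hpislow : ∀ n, 0 ≤ (piCount S (n + 1) : ℝ) - piCount S n ∧
      (piCount S (n + 1) : ℝ) - piCount S n ≤ 1 := by
    intro n
    rw [hstep]
    exact hX01 0 _
  intro ε hε
  have hev : ∀ᶠ m in atTop, ∀ q, |X m q - ρ q| < ε / 2 := by
    rw [Filter.eventually_all]
    intro q
    have := (Metric.tendsto_nhds.1 (hlim q)) (ε / 2) (by linarith)
    simpa [Real.dist_eq] using this
  obtain ⟨m, hm⟩ := hev.exists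
  have hbig := (tendsto_natCast_atTop_atTop (R := ℝ)).eventually_ge_atTop ((k:ℝ) ^ m * 2 / ε)
  filter_upwards [hbig] with N hN
  rw [div_le_iff₀ hε] at hN
  set n := N / k ^ m with hn
  set r := N % k ^ m with hr
  have hNr : N = k ^ m * n + r := (Nat.div_add_mod N (k ^ m)).symm
  have hrlt : (r:ℝ) ≤ k ^ m := by
    have : r < k ^ m := Nat.mod_lt _ (by positivity)
    exact_mod_cast this.le
  have hnN : (k:ℝ) ^ m * n ≤ N := by
    have : k ^ m * n ≤ N := Nat.mul_div_le N (k ^ m)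
    exact_mod_cast this
  have g1 := slow_growth (fun n => (piCount S n : ℝ)) hpislow (k ^ m * n) r
  have g2 := slow_growth Φ hΦslow (k ^ m * n) r
  rw [← hNr] at g1 g2
  have g3 : Φ (k ^ m * n) = k ^ m * Φ n := phi_scale k s ρ hρk m n
  have g4 := hpi m n
  have g5 : |∑ j ∈ Finset.range n, X m (s j) - Φ n| ≤ n * (ε / 2) := by
    rw [hΦ, ← Finset.sum_sub_distrib]
    refine (Finset.abs_sum_le_sum_abs _ _).trans ?_
    calc _ ≤ ∑ j ∈ Finset.range n, ε / 2 := Finset.sum_le_sum fun j _ => (hm (s j)).le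
      _ = _ := by simp
  have g6 : |(piCount S (k ^ m * n) : ℝ) - Φ (k ^ m * n)| ≤ N * (ε / 2) := by
    rw [g3, g4, ← mul_sub, abs_mul, abs_of_nonneg (by positivity : (0:ℝ) ≤ (k:ℝ) ^ m)]
    calc _ ≤ (k:ℝ) ^ m * (n * (ε / 2)) := mul_le_mul_of_nonneg_left g5 (by positivity)
      _ = (k ^ m * n) * (ε / 2) := by ring
      _ ≤ _ := mul_le_mul_of_nonneg_right hnN (by linarith)
  have g7 := abs_le.1 g6
  change |(piCount S N : ℝ) - Φ N| ≤ _
  rw [abs_le]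
  constructor <;> linarith

theorem eventually_periodic_idem {T : Type} [Finite T] (a : ℕ → T)
    (h : ∀ i j, a i = a j → a (i + 1) = a (j + 1)) : ∃ L, 1 ≤ L ∧ a (L + L) = a L := by
  obtain ⟨i, j, hij, e⟩ : ∃ i j, i < j ∧ a i = a j := by
    obtain ⟨i, j, hne, e⟩ := Finite.exists_ne_map_eq_of_infinite a
    rcases lt_or_gt_of_ne hne with h | h
    · exact ⟨i, j, h, e⟩
    · exact ⟨j, i, h, e.symm⟩
  obtain ⟨p, rfl⟩ := Nat.exists_eq_add_of_lt hij
  have h1 : ∀ t, a (i + t) = a (i + t + (p + 1)) := by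
    intro t
    induction t with
    | zero => simpa [add_assoc] using e
    | succ t ih =>
      have := h _ _ ih
      rw [← add_assoc, this]
      congr 1
      ring
  have h2 : ∀ c t, a (i + t) = a (i + t + c * (p + 1)) := by
    intro c
    induction c with
    | zero => simp
    | succ c ih =>
      intro t
      rw [ih t, add_assoc, h1 (t + c * (p + 1))]
      congr 1
      ring
  refine ⟨(i + 1) * (p + 1), by nlinarith, ?_⟩
  have h3 := h2 (i + 1) ((i + 1) * (p + 1) - i)
  have h4 : i + ((i + 1) * (p + 1) - i) = (i + 1) * (p + 1) := by
    have : i ≤ (i + 1) * (p + 1) := by nlinarith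
    omega
  rw [h4] at h3
  exact h3.symm

theorem cong_pow {Q : Type} {k : ℕ} (hk : 2 ≤ k) (s : ℕ → Q)
    (hcong : ∀ n n' b, b < k → s n = s n' → s (k * n + b) = s (k * n' + b)) (m : ℕ) :
    ∀ n n' b, b < k ^ m → s n = s n' → s (k ^ m * n + b) = s (k ^ m * n' + b) := by
  induction m with
  | zero =>
    intro n n' b hb h
    have : b = 0 := by simpa using hb
    subst this
    simpa using h
  | succ m ih =>
    intro n n' b hb h
    have hb1 : b / k ^ m < k := Nat.div_lt_of_lt_mul (by rwa [pow_succ] at hb)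
    have hb2 : b % k ^ m < k ^ m := Nat.mod_lt _ (by positivity)
    have e : ∀ n, k ^ (m + 1) * n + b = k ^ m * (k * n + b / k ^ m) + b % k ^ m := by
      intro n
      conv_lhs => rw [← Nat.div_add_mod b (k ^ m)]
      ring
    rw [e, e]
    exact ih _ _ _ hb2 (hcong _ _ _ hb1 h)

theorem exists_trans_power {Q : Type} [Finite Q] {k : ℕ} (hk : 2 ≤ k) (s : ℕ → Q)
    (hcong : ∀ n n' b, b < k → s n = s n' → s (k * n + b) = s (k * n' + b)) :
    ∃ L, 1 ≤ L ∧ ∀ n, ∀ b₁ < k ^ L, ∀ b₂ < k ^ L, ∃ b₃ < k ^ L,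
      s (k ^ L * (k ^ L * n + b₁) + b₂) = s (k ^ L * n + b₃) := by
  let a : ℕ → Set (Q × Q) := fun m => {p | ∃ n b, b < k ^ m ∧ s n = p.1 ∧ s (k ^ m * n + b) = p.2}
  have ha : ∀ m, a (m + 1) = {p | ∃ n b, b < k ∧ s n = p.1 ∧ (s (k * n + b), p.2) ∈ a m} := by
    intro m
    ext ⟨q, q'⟩
    simp only [a, Set.mem_ofPred_eq]
    constructor
    · rintro ⟨n, b, hb, h1, h2⟩
      have hb1 : b / k ^ m < k := Nat.div_lt_of_lt_mul (by rwa [pow_succ] at hb)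
      have hb2 : b % k ^ m < k ^ m := Nat.mod_lt _ (by positivity)
      refine ⟨n, b / k ^ m, hb1, h1, k * n + b / k ^ m, b % k ^ m, hb2, rfl, ?_⟩
      rw [← h2]
      congr 1
      conv_rhs => rw [← Nat.div_add_mod b (k ^ m)]
      ring
    · rintro ⟨n, b, hb, h1, n', b', hb', h2, h3⟩
      refine ⟨n, k ^ m * b + b', ?_, h1, ?_⟩
      · calc k ^ m * b + b' < k ^ m * b + k ^ m := by omega
          _ = k ^ m * (b + 1) := by ring
          _ ≤ k ^ m * k := Nat.mul_le_mul_left _ hb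
          _ = k ^ (m + 1) := by ring
      · rw [← h3, cong_pow hk s hcong m _ _ b' hb' h2]
        congr 1
        ring
  obtain ⟨L, hL, e⟩ := eventually_periodic_idem a (fun i j h => by rw [ha, ha, h])
  refine ⟨L, hL, fun n b₁ h₁ b₂ h₂ => ?_⟩
  have h1 : (s n, s (k ^ L * (k ^ L * n + b₁) + b₂)) ∈ a (L + L) := by
    refine ⟨n, k ^ L * b₁ + b₂, ?_, rfl, ?_⟩
    · calc k ^ L * b₁ + b₂ < k ^ L * b₁ + k ^ L := by omega
        _ = k ^ L * (b₁ + 1) := by ring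
        _ ≤ k ^ L * k ^ L := Nat.mul_le_mul_left _ h₁
        _ = k ^ (L + L) := by ring
    · simp only
      congr 1
      ring
  rw [e] at h1
  obtain ⟨n', b, hb, h2, h3⟩ := h1
  simp only at h2 h3
  exact ⟨b, hb, by rw [← h3, cong_pow hk s hcong L _ _ b hb h2]⟩

theorem automatic_state {k : ℕ} (hk : 2 ≤ k) (S : Set ℕ) (hS : IsAutomaticSet k S) :
    ∃ (Q : Type) (_ : Finite Q) (s : ℕ → Q) (A : Set Q), Function.Surjective s ∧
      (∀ n n' b, b < k → s n = s n' → s (k * n + b) = s (k * n' + b)) ∧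
      ∀ n, n ∈ S ↔ s n ∈ A := by
  obtain ⟨Q, hQ, q₀, δ, τ, h⟩ := hS
  let s : ℕ → Option Q := fun n =>
    if n = 0 then none else some (((Nat.digits k n).reverse).foldl δ q₀)
  have hmem : ∀ n, n ∈ S ↔ τ ((s n).getD q₀) = 1 := by
    intro n
    have e : ((s n).getD q₀) = ((Nat.digits k n).reverse).foldl δ q₀ := by
      by_cases hn : n = 0
      · simp [s, hn]
      · simp [s, hn]
    rw [e, ← h n]
    by_cases hn : n ∈ S <;> simp [hn]
  have hcong : ∀ n n' b, b < k → s n = s n' → s (k * n + b) = s (k * n' + b) := by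
    intro n n' b hb e
    by_cases hn : n = 0
    · have hn' : n' = 0 := by
        by_contra hne
        simp [s, hn, hne] at e
      rw [hn, hn']
    · have hn' : n' ≠ 0 := by
        rintro rfl
        simp [s, hn] at e
      have h1 : k * n + b ≠ 0 := by positivity
      have h2 : k * n' + b ≠ 0 := by positivity
      simp only [s, hn, hn', h1, h2, if_false, Option.some.injEq] at e ⊢
      rw [add_comm (k * n), add_comm (k * n'), Nat.digits_add k (by omega) b n hb (Or.inr hn),
        Nat.digits_add k (by omega) b n' hb (Or.inr hn')]
      simp only [List.reverse_cons, List.foldl_append, e]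
  refine ⟨Set.range s, inferInstance, Set.rangeFactorization s, {q | τ ((q : Option Q).getD q₀) = 1},
    Set.rangeFactorization_surjective, ?_, hmem⟩
  intro n n' b hb e
  have := hcong n n' b hb (congrArg Subtype.val e)
  exact Subtype.ext this

/-- The combined normal form. -/
theorem automatic_phi {k : ℕ} (hk : 2 ≤ k) (S : Set ℕ) (hS : IsAutomaticSet k S) :
    ∃ (K : ℕ) (Q : Type) (_ : Finite Q) (s : ℕ → Q) (ρ : Q → ℚ), 2 ≤ K ∧
      (∀ n n' b, b < K → s n = s n' → s (K * n + b) = s (K * n' + b)) ∧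
      (∀ q, 0 ≤ ρ q ∧ ρ q ≤ 1) ∧
      (∀ n, ∑ b ∈ Finset.range K, ρ (s (K * n + b)) = K * ρ (s n)) ∧
      ∀ ε : ℝ, 0 < ε → ∀ᶠ N : ℕ in atTop,
        |(piCount S N : ℝ) - ∑ j ∈ Finset.range N, (ρ (s j) : ℝ)| ≤ ε * N := by
  obtain ⟨Q, hQ, s, A, hs, hcong, hA⟩ := automatic_state hk S hS
  obtain ⟨L, hL, htr⟩ := exists_trans_power hk s hcong
  have hK : 2 ≤ k ^ L := hk.trans (Nat.le_self_pow (by omega) k)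
  obtain ⟨ρ, h1, h2, h3⟩ := exists_phi hK s hs (cong_pow hk s hcong L) htr S A hA
  exact ⟨k ^ L, Q, hQ, s, ρ, hK, cong_pow hk s hcong L, h1, h2, h3⟩

/-- Rationality of the supremum, by following optimal extensions and pigeonhole. -/
theorem rational_of_sup {Q : Type} [Finite Q] {k : ℕ} (hk : 2 ≤ k) (s : ℕ → Q) (ρ : Q → ℚ)
    (hcong : ∀ n n' b, b < k → s n = s n' → s (k * n + b) = s (k * n' + b))
    (hρ : ∀ n, ∑ b ∈ Finset.range k, ρ (s (k * n + b)) = k * ρ (s n)) (β : ℝ)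
    (hub : ∀ n : ℕ, 1 ≤ n → ∑ j ∈ Finset.range n, (ρ (s j) : ℝ) ≤ β * n)
    (hlub : ∀ ε : ℝ, 0 < ε → ∃ N : ℕ, 1 ≤ N ∧ (β - ε) * N ≤ ∑ j ∈ Finset.range N, (ρ (s j) : ℝ)) :
    ∃ b : ℚ, β = b := by
  have hk0 : (0:ℝ) < k := by positivity
  let Ψ : ℕ → ℝ := fun n => ∑ j ∈ Finset.range n, (ρ (s j) : ℝ) - β * n
  have hΨ : ∀ n, Ψ n = ∑ j ∈ Finset.range n, (ρ (s j) : ℝ) - β * n := fun n => rfl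
  have hΨ0 : ∀ n, 1 ≤ n → Ψ n ≤ 0 := fun n hn => by linarith [hub n hn, hΨ n]
  have hΨs : ∀ m n, Ψ (k ^ m * n) = k ^ m * Ψ n := by
    intro m n
    rw [hΨ, hΨ, phi_scale k s ρ hρ]
    push_cast
    ring
  have hΨd : ∀ m n n' b, b < k ^ m → s n = s n' →
      Ψ (k ^ m * n + b) - k ^ m * Ψ n = Ψ (k ^ m * n' + b) - k ^ m * Ψ n' := by
    intro m n n' b hb e
    rw [← hΨs, ← hΨs, hΨ, hΨ, hΨ, hΨ, Finset.sum_range_add, Finset.sum_range_add]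
    have : ∑ x ∈ Finset.range b, (ρ (s (k ^ m * n + x)) : ℝ) =
        ∑ x ∈ Finset.range b, (ρ (s (k ^ m * n' + x)) : ℝ) :=
      Finset.sum_congr rfl fun x hx => by
        rw [cong_pow hk s hcong m n n' x ((Finset.mem_range.1 hx).trans hb) e]
    rw [this]
    push_cast
    ring
  let Good : ℕ → Prop := fun n => 1 ≤ n ∧
    ∀ ε : ℝ, 0 < ε → ∃ m b, b < k ^ m ∧ -(ε * k ^ m) ≤ Ψ (k ^ m * n + b)
  have : Nonempty (Fin k) := ⟨⟨0, by omega⟩⟩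
  have hchild : ∀ n, Good n → ∃ b < k, Good (k * n + b) := by
    rintro n ⟨hn, hg⟩
    by_contra hcon
    have hcon' : ∀ b : Fin k, ∃ ε : ℝ, 0 < ε ∧ ∀ m c, c < k ^ m →
        Ψ (k ^ m * (k * n + b) + c) < -(ε * k ^ m) := by
      intro b
      by_contra h
      push Not at h
      refine hcon ⟨b, b.2, ?_, h⟩
      have : 0 < k * n := by positivity
      omega
    choose ε hε hbad using hcon'
    obtain ⟨b₀, hb₀⟩ := Finite.exists_min ε
    obtain ⟨m, b, hb, h⟩ := hg (ε b₀ / k) (div_pos (hε b₀) hk0)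
    cases m with
    | zero =>
      have hb' : b = 0 := by simpa using hb
      subst hb'
      have h1 := hbad ⟨0, by omega⟩ 0 0 (by simp)
      have h2 := hΨs 1 n
      have h3 := hb₀ ⟨0, by omega⟩
      simp only [pow_zero, pow_one, one_mul, add_zero, mul_one] at h h1 h2
      rw [h2] at h1
      rw [← neg_div, div_le_iff₀ hk0] at h
      linarith
    | succ m =>
      have hb1 : b / k ^ m < k := Nat.div_lt_of_lt_mul (by rwa [pow_succ] at hb)
      have hb2 : b % k ^ m < k ^ m := Nat.mod_lt _ (by positivity)
      have e : k ^ (m + 1) * n + b = k ^ m * (k * n + b / k ^ m) + b % k ^ m := by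
        conv_lhs => rw [← Nat.div_add_mod b (k ^ m)]
        ring
      have h1 := hbad ⟨b / k ^ m, hb1⟩ m _ hb2
      simp only at h1
      rw [← e] at h1
      have h3 := hb₀ ⟨b / k ^ m, hb1⟩
      have h4 : ε b₀ / k * (k:ℝ) ^ (m + 1) = ε b₀ * k ^ m := by field_simp; try ring
      rw [h4] at h
      have h5 : ε b₀ * (k:ℝ) ^ m ≤ ε ⟨b / k ^ m, hb1⟩ * k ^ m :=
        mul_le_mul_of_nonneg_right h3 (by positivity)
      linarith
  have hstart : ∃ n, Good n := by
    by_contra hcon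
    have hcon' : ∀ b : Fin k, ∃ ε : ℝ, 0 < ε ∧ (1 ≤ (b : ℕ) → ∀ m c, c < k ^ m →
        Ψ (k ^ m * b + c) < -(ε * k ^ m)) := by
      intro b
      by_cases hb : 1 ≤ (b : ℕ)
      · by_contra h
        push Not at h
        refine hcon ⟨b, hb, fun ε hε => (h ε hε).2⟩
      · exact ⟨1, one_pos, fun h => absurd h hb⟩
    choose ε hε hbad using hcon'
    obtain ⟨b₀, hb₀⟩ := Finite.exists_min ε
    obtain ⟨N, hN, h⟩ := hlub (ε b₀ / k) (div_pos (hε b₀) hk0)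
    set m := Nat.log k N with hm
    have h1 : N < k ^ (m + 1) := Nat.lt_pow_succ_log_self (by omega) N
    have h2 : k ^ m ≤ N := Nat.pow_log_le_self k (by omega)
    have hb1 : N / k ^ m < k := Nat.div_lt_of_lt_mul (by rwa [pow_succ] at h1)
    have hb2 : N % k ^ m < k ^ m := Nat.mod_lt _ (by positivity)
    have hb3 : 1 ≤ N / k ^ m := (Nat.one_le_div_iff (by positivity)).2 h2
    have h3 := hbad ⟨N / k ^ m, hb1⟩ hb3 m _ hb2
    simp only [Nat.div_add_mod] at h3
    have h4 := hb₀ ⟨N / k ^ m, hb1⟩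
    have h5 : ε b₀ * (k:ℝ) ^ m ≤ ε ⟨N / k ^ m, hb1⟩ * k ^ m :=
      mul_le_mul_of_nonneg_right h4 (by positivity)
    have h6 : (N:ℝ) ≤ k ^ (m + 1) := by exact_mod_cast h1.le
    have h7 : ε b₀ / k * N ≤ ε b₀ / k * k ^ (m + 1) :=
      mul_le_mul_of_nonneg_left h6 (div_pos (hε b₀) hk0).le
    have h8 : ε b₀ / k * (k:ℝ) ^ (m + 1) = ε b₀ * k ^ m := by field_simp; try ring
    rw [hΨ] at h3
    linarith
  have heq : ∀ n n', Good n → Good n' → s n = s n' → Ψ n' ≤ Ψ n := by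
    intro n n' hg hg' e
    by_contra hlt
    push Not at hlt
    obtain ⟨m, b, hb, h⟩ := hg.2 ((Ψ n' - Ψ n) / 2) (by linarith)
    have h1 := hΨd m n n' b hb e
    have h2 := hΨ0 (k ^ m * n' + b) (by
      have : 0 < k ^ m * n' := Nat.mul_pos (by positivity) hg'.1
      omega)
    have h3 : 0 < (k:ℝ) ^ m * (Ψ n' - Ψ n) := mul_pos (by positivity) (by linarith)
    nlinarith
  obtain ⟨n₀, hn₀⟩ := hstart
  choose! c hc hgc using hchild
  let f : ℕ → ℕ := fun i => (fun n => k * n + c n)^[i] n₀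
  have hf : ∀ i, f (i + 1) = k * f i + c (f i) := fun i => Function.iterate_succ_apply' _ _ _
  have hfg : ∀ i, Good (f i) := by
    intro i
    induction i with
    | zero => exact hn₀
    | succ i ih => rw [hf]; exact hgc _ ih
  have hmono : StrictMono f := strictMono_nat_of_lt_succ fun i => by
    rw [hf]
    have := (hfg i).1
    nlinarith
  obtain ⟨i, j, hne, e⟩ := Finite.exists_ne_map_eq_of_infinite (fun i => s (f i))
  have hne' : f i ≠ f j := fun h => hne (hmono.injective h)
  have hΨe : Ψ (f i) = Ψ (f j) :=
    le_antisymm (heq _ _ (hfg j) (hfg i) e.symm) (heq _ _ (hfg i) (hfg j) e)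
  rw [hΨ, hΨ] at hΨe
  refine ⟨(∑ x ∈ Finset.range (f i), ρ (s x) - ∑ x ∈ Finset.range (f j), ρ (s x)) / (f i - f j), ?_⟩
  have hne'' : (f i : ℝ) - f j ≠ 0 := sub_ne_zero.2 (by exact_mod_cast hne')
  push_cast
  rw [eq_div_iff hne'']
  linarith

theorem piCount_le (S : Set ℕ) (N : ℕ) : piCount S N ≤ N := by
  classical
  induction N with
  | zero => simp [piCount_zero]
  | succ n ih => rw [piCount_succ]; split_ifs <;> omega

theorem ratio_nonneg (S : Set ℕ) (N : ℕ) : 0 ≤ (piCount S N : ℝ) / N := by positivity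

theorem ratio_le_one (S : Set ℕ) (N : ℕ) : (piCount S N : ℝ) / N ≤ 1 :=
  div_le_one_of_le₀ (by exact_mod_cast piCount_le S N) (by positivity)

theorem ratio_bdd_le (S : Set ℕ) :
    IsBoundedUnder (· ≤ ·) atTop (fun N : ℕ => (piCount S N : ℝ) / N) :=
  isBoundedUnder_of ⟨1, ratio_le_one S⟩

theorem ratio_bdd_ge (S : Set ℕ) :
    IsBoundedUnder (· ≥ ·) atTop (fun N : ℕ => (piCount S N : ℝ) / N) :=
  isBoundedUnder_of ⟨0, ratio_nonneg S⟩

/-- The main facts about the upper density. -/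
theorem upper_density_facts {k : ℕ} (hk : 2 ≤ k) (S : Set ℕ) (hS : IsAutomaticSet k S) :
    (∃ b : ℚ, Filter.atTop.limsup (fun N : ℕ => (piCount S N : ℝ) / N) = b) ∧
    (Filter.atTop.liminf (fun N : ℕ => (piCount S N : ℝ) / N) = 0 →
      Filter.atTop.limsup (fun N : ℕ => (piCount S N : ℝ) / N) = 0) := by
  obtain ⟨K, Q, hQ, s, ρ, hK, hcong, hρ01, hρ, happ⟩ := automatic_phi hk S hS
  have hK0 : (0:ℝ) < K := by positivity
  set β := Filter.atTop.limsup (fun N : ℕ => (piCount S N : ℝ) / N) with hβ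
  set Φ : ℕ → ℝ := fun N => ∑ j ∈ Finset.range N, (ρ (s j) : ℝ) with hΦ
  have hscale : ∀ m n, Φ (K ^ m * n) = K ^ m * Φ n := phi_scale K s ρ hρ
  have hub : ∀ n : ℕ, 1 ≤ n → Φ n ≤ β * n := by
    intro n hn
    by_contra hlt
    push Not at hlt
    have hn0 : (0:ℝ) < n := by exact_mod_cast hn
    have hlt' : β < Φ n / n := by rwa [lt_div_iff₀ hn0]
    obtain ⟨c, hc1, hc2⟩ := exists_between hlt'
    have hev := eventually_lt_of_limsup_lt (hβ ▸ hc1) (ratio_bdd_le S)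
    have hev2 := happ ((Φ n / n - c) / 2) (by linarith)
    have ht : Tendsto (fun m => K ^ m * n) atTop atTop :=
      (tendsto_pow_atTop_atTop_of_one_lt (by omega)).atTop_mul_const' (by omega)
    obtain ⟨m, h1, h2⟩ := ((ht.eventually hev).and (ht.eventually hev2)).exists
    have hpos : (0:ℝ) < (K:ℝ) ^ m * n := by positivity
    change |_ - Φ _| ≤ _ at h2
    rw [hscale] at h2
    push_cast at h1 h2
    rw [div_lt_iff₀ hpos] at h1
    have h3 := (abs_le.1 h2).1
    have h4 : (K:ℝ) ^ m * Φ n = (Φ n / n) * (K ^ m * n) := by field_simp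
    rw [h4] at h3
    nlinarith
  have hlub : ∀ ε : ℝ, 0 < ε → ∃ N : ℕ, 1 ≤ N ∧ (β - ε) * N ≤ Φ N := by
    intro ε hε
    have hfr := frequently_lt_of_lt_limsup (b := β - ε / 2) (f := atTop)
      (u := fun N : ℕ => (piCount S N : ℝ) / N) (ratio_bdd_ge S).isCoboundedUnder_le
      (by rw [← hβ]; linarith)
    obtain ⟨N, h1, h2, h3⟩ := (hfr.and_eventually
      ((happ (ε / 2) (by linarith)).and (eventually_ge_atTop 1))).exists
    refine ⟨N, h3, ?_⟩
    have hN : (0:ℝ) < N := by exact_mod_cast h3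
    rw [lt_div_iff₀ hN] at h1
    have h4 := (abs_le.1 h2).2
    change _ - Φ N ≤ _ at h4
    linarith
  refine ⟨rational_of_sup hK s ρ hcong hρ β hub hlub, fun hα => ?_⟩
  have hmono : Monotone Φ := by
    refine monotone_nat_of_le_succ fun n => ?_
    simp only [hΦ, Finset.sum_range_succ]
    have : (0:ℝ) ≤ ρ (s n) := by exact_mod_cast (hρ01 (s n)).1
    linarith
  have hΦ1 : 0 ≤ Φ 1 := by
    have := hmono (Nat.zero_le 1)
    simpa [hΦ] using this
  have hΦ1' : Φ 1 = 0 := by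
    by_contra hne
    have hpos : 0 < Φ 1 := lt_of_le_of_ne hΦ1 (Ne.symm hne)
    have hle : Φ 1 / K / 2 ≤ Filter.atTop.liminf (fun N : ℕ => (piCount S N : ℝ) / N) := by
      refine le_liminf_of_le (ratio_bdd_le S).isCoboundedUnder_ge ?_
      filter_upwards [happ (Φ 1 / K / 2) (by positivity), eventually_ge_atTop 1] with N h1 h2
      have hN : (0:ℝ) < N := by exact_mod_cast h2
      rw [le_div_iff₀ hN]
      have h3 := (abs_le.1 h1).1
      change _ ≤ _ - Φ N at h3
      set m := Nat.log K N with hm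
      have h4 : N < K ^ (m + 1) := Nat.lt_pow_succ_log_self (by omega) N
      have h5 : K ^ m ≤ N := Nat.pow_log_le_self K (by omega)
      have h6 := hmono h5
      have h7 := hscale m 1
      rw [mul_one] at h7
      have h8 : (N:ℝ) ≤ K ^ (m + 1) := by exact_mod_cast h4.le
      have h9 : Φ 1 / K * N ≤ Φ 1 / K * K ^ (m + 1) := mul_le_mul_of_nonneg_left h8 (by positivity)
      have h10 : Φ 1 / K * (K:ℝ) ^ (m + 1) = K ^ m * Φ 1 := by field_simp; try ring
      linarith
    have : 0 < Φ 1 / K / 2 := by positivity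
    linarith
  have hΦ0 : ∀ N, Φ N ≤ 0 := by
    intro N
    have h1 : N ≤ K ^ N := (Nat.lt_pow_self (by omega)).le
    have h2 := hmono h1
    have h7 := hscale N 1
    rw [mul_one, hΦ1', mul_zero] at h7
    linarith
  apply le_antisymm
  · by_contra hlt
    push Not at hlt
    obtain ⟨N, h1, h2⟩ := hlub (β / 2) (by linarith)
    have hN : (0:ℝ) < N := by exact_mod_cast h1
    have := hΦ0 N
    nlinarith
  · have := hub 1 le_rfl
    rw [hΦ1'] at this
    simpa using this

theorem compl_automatic {k : ℕ} (S : Set ℕ) (hS : IsAutomaticSet k S) : IsAutomaticSet k Sᶜ := by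
  obtain ⟨Q, hQ, q₀, δ, τ, h⟩ := hS
  refine ⟨Q, hQ, q₀, δ, fun q => 1 - τ q, fun n => ?_⟩
  simp only
  rw [← h n]
  by_cases hn : n ∈ S <;> simp [hn]

theorem compl_ratio (S : Set ℕ) {N : ℕ} (hN : 1 ≤ N) :
    (piCount Sᶜ N : ℝ) / N = 1 - (piCount S N : ℝ) / N := by
  classical
  have h : ∀ N, piCount Sᶜ N + piCount S N = N := by
    intro N
    induction N with
    | zero => simp [piCount_zero]
    | succ n ih =>
      rw [piCount_succ, piCount_succ]
      by_cases hn : n ∈ S <;> simp [hn] <;> omega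
  have hN0 : (N:ℝ) ≠ 0 := by positivity
  have h1 : (piCount Sᶜ N : ℝ) + piCount S N = N := by exact_mod_cast h N
  field_simp
  linarith

theorem compl_limsup (S : Set ℕ) :
    Filter.atTop.limsup (fun N : ℕ => (piCount Sᶜ N : ℝ) / N) =
      1 - Filter.atTop.liminf (fun N : ℕ => (piCount S N : ℝ) / N) := by
  have hanti : Antitone (fun x : ℝ => 1 - x) := fun a b h => by simp only; linarith
  have h := hanti.map_liminf_of_continuousAt (F := atTop) (fun N : ℕ => (piCount S N : ℝ) / N)
    (by fun_prop) (ratio_bdd_le S).isCoboundedUnder_ge (ratio_bdd_ge S)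
  rw [h]
  refine limsup_congr ?_
  filter_upwards [eventually_ge_atTop 1] with N hN
  exact compl_ratio S hN

theorem densities_of_automatic_set
    (k : ℕ) (hk : 2 ≤ k) (S : Set ℕ) (hS : IsAutomaticSet k S)
    (α β : ℝ)
    (hα : α = Filter.atTop.liminf (fun N : ℕ => (piCount S N : ℝ) / N))
    (hβ : β = Filter.atTop.limsup (fun N : ℕ => (piCount S N : ℝ) / N)) :
    (α = 0 ∧ β = 0) ∨ (α = 1 ∧ β = 1) ∨
      (∃ a b : ℚ, α = (a : ℝ) ∧ β = (b : ℝ) ∧ 0 < α ∧ α ≤ β ∧ β < 1) := by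
  have h1 := upper_density_facts hk S hS
  have h2 := upper_density_facts hk Sᶜ (compl_automatic S hS)
  have e1 := compl_limsup S
  have e2 := compl_limsup Sᶜ
  rw [compl_compl] at e2
  rw [e1] at h2
  rw [← hα] at h1 h2 e1
  rw [← hβ] at h1 e2
  have hle : α ≤ β := by
    rw [hα, hβ]
    exact liminf_le_limsup (ratio_bdd_le S) (ratio_bdd_ge S)
  have hα0 : 0 ≤ α := by
    rw [hα]
    exact le_liminf_of_le (ratio_bdd_le S).isCoboundedUnder_ge (Eventually.of_forall (ratio_nonneg S))
  have hβ1 : β ≤ 1 := by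
    rw [hβ]
    exact limsup_le_of_le (ratio_bdd_ge S).isCoboundedUnder_le (Eventually.of_forall (ratio_le_one S))
  by_cases hz : α = 0
  · exact Or.inl ⟨hz, h1.2 hz⟩
  by_cases ho : β = 1
  · right; left
    have := h2.2 (by linarith)
    exact ⟨by linarith, ho⟩
  right; right
  obtain ⟨b, hb⟩ := h1.1
  obtain ⟨a, ha⟩ := h2.1
  refine ⟨1 - a, b, ?_, hb, lt_of_le_of_ne hα0 (Ne.symm hz), hle, lt_of_le_of_ne hβ1 ho⟩
  push_cast
  linarith
end
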